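/- arXiv:2008.04990 — 11 statements merged into one kernel-verified Lean document; each statement's English description precedes it below -/
import Mathlib

section
/- Let S and A be finite nonempty sets and d a positive integer. Suppose the transition kernel of a finite MDP factorizes as P(s'|s,a) = \sum_{i=1}^d P1(i|s,a) P2(s'|i), where each P1(\cdot|s,a) is a probability distribution on {1,...,d} and each P2(\cdot|i) is a probability distribution on S, and suppose the initial distribution satisfies d0(s) = \sum_{i=1}^d w_i P2(s|i) for some probability weights (w_i). Define \mu(s,a) := (1/(d·|A|)) \sum_{i=1}^d P2(s|i). Then \mu is a probability distribution on S × A, and with \mu_S(s) := \sum_a \mu(s,a): (i) d0(s) ≤ d·\mu_S(s) for all s; (ii) P(s'|s,a) ≤ d·\mu_S(s') for all (s,a,s'); and (iii) whenever \mu_S(s) > 0, \mu(s,a)/\mu_S(s) = 1/|A| for every a. In particular, the concentrability assumption holds with C_S ≤ d and C_A ≤ |A|, i.e., C = C_S·C_A ≤ d·|A|. -/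
/-- In a low-rank MDP whose transition kernel admits a stochastic
factorization `P(s'|s,a) = ∑ i, P1(i|s,a) * P2(s'|i)` and whose initial distribution
is a mixture of the rows of `P2`, the data distribution
`μ(s,a) := (1/(d·|A|)) ∑ i, P2(s|i)` is a probability distribution on `S × A` satisfying
the concentrability assumption with `C_S ≤ d` and `C_A ≤ |A|`. -/
theorem stmt0 {S A : Type*} [Fintype S] [Fintype A] [Nonempty S] [Nonempty A]
    (d : ℕ) (hd : 0 < d)
    (P : S → A → S → ℝ) (P1 : S → A → Fin d → ℝ) (P2 : Fin d → S → ℝ)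
    (d0 : S → ℝ) (w : Fin d → ℝ)
    (hP1nn : ∀ s a i, 0 ≤ P1 s a i) (hP1sum : ∀ s a, ∑ i, P1 s a i = 1)
    (hP2nn : ∀ i s, 0 ≤ P2 i s) (hP2sum : ∀ i, ∑ s, P2 i s = 1)
    (hfac : ∀ s a s', P s a s' = ∑ i, P1 s a i * P2 i s')
    (hwnn : ∀ i, 0 ≤ w i) (hwsum : ∑ i, w i = 1)
    (hd0 : ∀ s, d0 s = ∑ i, w i * P2 i s)
    (μ : S → A → ℝ)
    (hμ : ∀ s a, μ s a = (1 / ((d : ℝ) * (Fintype.card A : ℝ))) * ∑ i, P2 i s)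
    (μS : S → ℝ) (hμS : ∀ s, μS s = ∑ a, μ s a) :
    -- μ is a probability distribution on S × A
    ((∀ s a, 0 ≤ μ s a) ∧ ∑ s, ∑ a, μ s a = 1) ∧
    -- (i) the initial distribution is covered with constant d
    (∀ s, d0 s ≤ (d : ℝ) * μS s) ∧
    -- (ii) every next-state distribution is covered with constant d
    (∀ s a s', P s a s' ≤ (d : ℝ) * μS s') ∧
    -- (iii) the conditional action distribution is uniform, hence C_A ≤ |A|
    (∀ s, 0 < μS s → ∀ a, μ s a / μS s = 1 / (Fintype.card A : ℝ)) := by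
  have hd' : (d : ℝ) ≠ 0 := by exact_mod_cast hd.ne'
  have hA : (Fintype.card A : ℝ) ≠ 0 := by exact_mod_cast Fintype.card_ne_zero
  have hS : ∀ s, μS s = (Fintype.card A : ℝ) * μ s (Classical.arbitrary A) := by
    intro s
    simp [hμS, hμ]
  have hdS : ∀ s, (d : ℝ) * μS s = ∑ i, P2 i s := by
    intro s
    rw [hS, hμ]
    field_simp
  have key : ∀ (v : Fin d → ℝ), (∀ i, 0 ≤ v i) → ∑ i, v i = 1 → ∀ s,
      ∑ i, v i * P2 i s ≤ (d : ℝ) * μS s := by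
    intro v hv hv1 s
    rw [hdS]
    refine Finset.sum_le_sum fun i _ => ?_
    have h1 : v i ≤ 1 := by
      rw [← hv1]
      exact Finset.single_le_sum (fun j _ => hv j) (Finset.mem_univ i)
    exact mul_le_of_le_one_left (hP2nn i s) h1
  refine ⟨⟨?_, ?_⟩, ?_, ?_, ?_⟩
  · intro s a
    rw [hμ]
    exact mul_nonneg (by positivity) (Finset.sum_nonneg fun i _ => hP2nn i s)
  · have h : (d : ℝ) * ∑ s, ∑ a, μ s a = d := by
      rw [Finset.mul_sum]
      simp_rw [← hμS, hdS]
      rw [Finset.sum_comm]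
      simp [hP2sum]
    exact mul_left_cancel₀ hd' (by rw [h, mul_one])
  · intro s
    rw [hd0]
    exact key w hwnn hwsum s
  · intro s a s'
    rw [hfac]
    exact key _ (hP1nn s a) (hP1sum s a) s'
  · intro s hs a
    have h : μS s = (Fintype.card A : ℝ) * μ s a := by rw [hS, hμ, hμ]
    rw [div_eq_div_iff hs.ne' hA, h]
    ring
end

section
/- The projected Bellman operator T_φ^μ is a γ-contraction under the sup norm: for all f, f' : S × A → ℝ, ‖T_φ^μ f − T_φ^μ f'‖_∞ ≤ γ ‖f − f'‖_∞. Consequently, T_φ^μ has a unique fixed point. -/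
/-- `V_f(s) := max_a f(s,a)`. -/
noncomputable def Vof {S A : Type*} [Fintype A] [Nonempty A]
    (f : S × A → ℝ) (s : S) : ℝ :=
  Finset.univ.sup' Finset.univ_nonempty (fun a => f (s, a))

/-- The Bellman optimality operator `(T f)(s,a) = R(s,a) + γ ∑ s', P(s'|s,a) V_f(s')`. -/
noncomputable def bellmanT {S A : Type*} [Fintype S] [Fintype A] [Nonempty A]
    (P : S → A → S → ℝ) (R : S → A → ℝ) (γ : ℝ) (f : S × A → ℝ) : S × A → ℝ :=
  fun q => R q.1 q.2 + γ * ∑ s', P q.1 q.2 s' * Vof f s'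

/-- The projected Bellman operator `T_φ^μ`, which averages `T f` over each
aggregation cell with weights proportional to `μ`. -/
noncomputable def projT {S A X : Type*} [Fintype S] [Fintype A] [Nonempty A]
    [DecidableEq X]
    (P : S → A → S → ℝ) (R : S → A → ℝ) (γ : ℝ)
    (μ : S × A → ℝ) (φ : S × A → X) (f : S × A → ℝ) : S × A → ℝ :=
  fun q => (∑ q', if φ q' = φ q then μ q' * bellmanT P R γ f q' else 0)
         / (∑ q', if φ q' = φ q then μ q' else 0)

/-- `‖f‖_∞ = max_{s,a} |f(s,a)|`. -/
noncomputable def supNorm {S A : Type*} [Fintype S] [Fintype A] [Nonempty S] [Nonempty A]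
    (f : S × A → ℝ) : ℝ :=
  Finset.univ.sup' Finset.univ_nonempty (fun q => |f q|)

theorem Vof_le_add {S A : Type*} [Fintype A] [Nonempty A]
    (f f' : S × A → ℝ) (c : ℝ) (h : ∀ q, f q - f' q ≤ c) (s : S) :
    Vof f s ≤ Vof f' s + c := by
  unfold Vof
  apply Finset.sup'_le
  intro a _
  have h1 := Finset.le_sup' (fun a => f' (s, a)) (Finset.mem_univ a)
  have h2 := h (s, a)
  linarith

theorem bellmanT_le_add {S A : Type*} [Fintype S] [Fintype A] [Nonempty A]
    (P : S → A → S → ℝ) (R : S → A → ℝ) (γ : ℝ)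
    (hP0 : ∀ s a s', 0 ≤ P s a s') (hP1 : ∀ s a, ∑ s', P s a s' = 1) (hγ0 : 0 ≤ γ)
    (f f' : S × A → ℝ) (c : ℝ) (h : ∀ q, f q - f' q ≤ c) (q : S × A) :
    bellmanT P R γ f q ≤ bellmanT P R γ f' q + γ * c := by
  unfold bellmanT
  have h1 : ∑ s', P q.1 q.2 s' * Vof f s' ≤ ∑ s', P q.1 q.2 s' * Vof f' s' + c := by
    calc ∑ s', P q.1 q.2 s' * Vof f s'
        ≤ ∑ s', P q.1 q.2 s' * (Vof f' s' + c) :=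
          Finset.sum_le_sum fun s' _ =>
            mul_le_mul_of_nonneg_left (Vof_le_add f f' c h s') (hP0 _ _ _)
      _ = ∑ s', P q.1 q.2 s' * Vof f' s' + c := by
          simp only [mul_add, Finset.sum_add_distrib, ← Finset.sum_mul, hP1, one_mul]
  have h2 := mul_le_mul_of_nonneg_left h1 hγ0
  linarith

theorem projT_le_add {S A X : Type*} [Fintype S] [Fintype A] [Nonempty A] [DecidableEq X]
    (P : S → A → S → ℝ) (R : S → A → ℝ) (γ : ℝ)
    (hP0 : ∀ s a s', 0 ≤ P s a s') (hP1 : ∀ s a, ∑ s', P s a s' = 1) (hγ0 : 0 ≤ γ)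
    (μ : S × A → ℝ) (hμpos : ∀ q, 0 < μ q) (φ : S × A → X)
    (f f' : S × A → ℝ) (c : ℝ) (h : ∀ q, f q - f' q ≤ c) (q : S × A) :
    projT P R γ μ φ f q ≤ projT P R γ μ φ f' q + γ * c := by
  unfold projT
  have hpos : 0 < ∑ q', if φ q' = φ q then μ q' else 0 := by
    apply Finset.sum_pos'
    · intro i _
      split_ifs
      · exact (hμpos i).le
      · exact le_rfl
    · exact ⟨q, Finset.mem_univ q, by simpa using hμpos q⟩
  rw [div_add' _ _ _ hpos.ne']
  apply div_le_div_of_nonneg_right _ hpos.le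
  rw [Finset.mul_sum, ← Finset.sum_add_distrib]
  apply Finset.sum_le_sum
  intro q' _
  split_ifs
  · have := mul_le_mul_of_nonneg_left
      (bellmanT_le_add P R γ hP0 hP1 hγ0 f f' c h q') (hμpos q').le
    linarith
  · simp

theorem abs_le_supNorm {S A : Type*} [Fintype S] [Fintype A] [Nonempty S] [Nonempty A]
    (f : S × A → ℝ) (q : S × A) : |f q| ≤ supNorm f :=
  Finset.le_sup' (fun q => |f q|) (Finset.mem_univ q)

theorem supNorm_eq_norm {S A : Type*} [Fintype S] [Fintype A] [Nonempty S] [Nonempty A]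
    (f : S × A → ℝ) : supNorm f = ‖f‖ := by
  apply le_antisymm
  · exact Finset.sup'_le _ _ fun q _ => norm_le_pi_norm f q
  · exact (pi_norm_le_iff_of_nonempty f).2 fun q => abs_le_supNorm f q

/-- The projected Bellman operator `T_φ^μ` is a `γ`-contraction
under the sup norm; consequently it has a unique fixed point. -/
theorem stmt2 {S A X : Type*} [Fintype S] [Fintype A] [Nonempty S] [Nonempty A]
    [DecidableEq X]
    (P : S → A → S → ℝ) (R : S → A → ℝ) (Rmax γ : ℝ)
    (hP0 : ∀ s a s', 0 ≤ P s a s') (hP1 : ∀ s a, ∑ s', P s a s' = 1)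
    (hR : ∀ s a, 0 ≤ R s a ∧ R s a ≤ Rmax)
    (hγ0 : 0 ≤ γ) (hγ1 : γ < 1)
    (μ : S × A → ℝ) (hμpos : ∀ q, 0 < μ q) (hμsum : ∑ q, μ q = 1)
    (φ : S × A → X) :
    (∀ f f' : S × A → ℝ,
      supNorm (fun q => projT P R γ μ φ f q - projT P R γ μ φ f' q)
        ≤ γ * supNorm (fun q => f q - f' q)) ∧
    (∃! f : S × A → ℝ, projT P R γ μ φ f = f) := by
  have key : ∀ f f' : S × A → ℝ,
      supNorm (fun q => projT P R γ μ φ f q - projT P R γ μ φ f' q)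
        ≤ γ * supNorm (fun q => f q - f' q) := by
    intro f f'
    apply Finset.sup'_le
    intro q _
    have hb := fun q => abs_le.1 (abs_le_supNorm (fun q => f q - f' q) q)
    have h1 := projT_le_add P R γ hP0 hP1 hγ0 μ hμpos φ f f' _ (fun q => (hb q).2) q
    have h2 := projT_le_add P R γ hP0 hP1 hγ0 μ hμpos φ f' f
      (supNorm (fun q => f q - f' q)) (fun q => by have := (hb q).1; linarith) q
    rw [abs_le]
    constructor <;> linarith
  refine ⟨key, ?_⟩
  have hc : ContractingWith ⟨γ, hγ0⟩ (projT P R γ μ φ) := by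
    refine ⟨by exact_mod_cast hγ1, LipschitzWith.of_dist_le_mul fun f f' => ?_⟩
    have := key f f'
    rw [supNorm_eq_norm, supNorm_eq_norm] at this
    rw [dist_eq_norm, dist_eq_norm]
    exact this
  exact ⟨hc.fixedPoint, hc.fixedPoint_isFixedPt, fun g hg => hc.fixedPoint_unique hg⟩
end

section
/- Consider an uncontrolled finite Markov chain: S a finite nonempty set and P a row-stochastic S × S matrix (P(s'|s) ≥ 0, \sum_{s'} P(s'|s) = 1). Let μ be a probability distribution on S with μ(s) > 0 for all s that is invariant, i.e., \sum_s μ(s) P(s'|s) = μ(s') for all s'. For any state aggregation φ : S → X, define P_φ(s'|s) := (\sum_{s̃ : φ(s̃) = φ(s)} μ(s̃) P(s'|s̃)) / (\sum_{s̃ : φ(s̃) = φ(s)} μ(s̃)). Then μ is also invariant for the aggregated chain: \sum_s μ(s) P_φ(s'|s) = μ(s') for all s'. -/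
/-- For an uncontrolled finite Markov chain with row-stochastic
kernel `P` and a fully-supported invariant distribution `μ`, the distribution `μ`
remains invariant for the aggregated chain `P_φ`, for any state aggregation `φ`. -/
theorem stmt5 {S X : Type*} [Fintype S] [Nonempty S] [DecidableEq X]
    (P : S → S → ℝ)
    (hP0 : ∀ s s', 0 ≤ P s s') (hP1 : ∀ s, ∑ s', P s s' = 1)
    (μ : S → ℝ) (hμpos : ∀ s, 0 < μ s) (hμsum : ∑ s, μ s = 1)
    (hinv : ∀ s', ∑ s, μ s * P s s' = μ s')
    (φ : S → X)
    (Pφ : S → S → ℝ)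
    (hPφ : ∀ s s', Pφ s s' =
      (∑ t, if φ t = φ s then μ t * P t s' else 0)
        / (∑ t, if φ t = φ s then μ t else 0)) :
    ∀ s', ∑ s, μ s * Pφ s s' = μ s' := by
  intro s'
  have hM : ∀ s, 0 < ∑ t, if φ t = φ s then μ t else 0 := by
    intro s
    apply Finset.sum_pos'
    · intro t _
      split_ifs
      · exact (hμpos t).le
      · exact le_rfl
    · exact ⟨s, Finset.mem_univ s, by simpa using hμpos s⟩
  rw [← hinv s']
  have h1 : ∀ s, μ s * Pφ s s' = ∑ t, (μ t * P t s') *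
      ((if φ s = φ t then μ s else 0) / (∑ r, if φ r = φ t then μ r else 0)) := by
    intro s
    rw [hPφ, Finset.sum_div, Finset.mul_sum]
    refine Finset.sum_congr rfl fun t _ => ?_
    by_cases h : φ t = φ s
    · simp only [h, if_true]
      ring
    · simp [h, Ne.symm h]
  rw [Finset.sum_congr rfl fun s _ => h1 s, Finset.sum_comm]
  refine Finset.sum_congr rfl fun t _ => ?_
  rw [← Finset.mul_sum, ← Finset.sum_div, div_self (hM t).ne', mul_one]
end

section
/- ‖Q⋆ − T_φ^μ Q⋆‖_∞ ≤ 2 ε_φ, where ε_φ := min_{g ∈ G_φ} ‖g − Q⋆‖_∞ is the best sup-norm approximation error of Q⋆ by functions piecewise constant with respect to the aggregation φ. -/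
/-- A function is piecewise constant with respect to an aggregation `φ` if it is
constant on each aggregation cell; `G_φ` is the class of such functions. -/
def PiecewiseConst {S A X : Type*} (φ : S × A → X) (g : S × A → ℝ) : Prop :=
  ∀ q q' : S × A, φ q = φ q' → g q = g q'

/-- `‖Q⋆ − T_φ^μ Q⋆‖_∞ ≤ 2 ε_φ`, where
`ε_φ = min_{g ∈ G_φ} ‖g − Q⋆‖_∞` is the best sup-norm approximation error of `Q⋆`
by functions piecewise constant with respect to `φ`. -/
theorem stmt7 {S A X : Type*} [Fintype S] [Fintype A] [Nonempty S] [Nonempty A]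
    [DecidableEq X]
    (P : S → A → S → ℝ) (R : S → A → ℝ) (Rmax γ : ℝ)
    (hP0 : ∀ s a s', 0 ≤ P s a s') (hP1 : ∀ s a, ∑ s', P s a s' = 1)
    (hR : ∀ s a, 0 ≤ R s a ∧ R s a ≤ Rmax)
    (hγ0 : 0 ≤ γ) (hγ1 : γ < 1)
    (μ : S × A → ℝ) (hμpos : ∀ q, 0 < μ q) (hμsum : ∑ q, μ q = 1)
    (φ : S × A → X)
    (Qstar : S × A → ℝ) (hQstar : bellmanT P R γ Qstar = Qstar)
    (εφ : ℝ)
    (hεφ : IsLeast {e : ℝ | ∃ g : S × A → ℝ, PiecewiseConst φ g ∧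
              supNorm (fun q => g q - Qstar q) = e} εφ) :
    supNorm (fun q => Qstar q - projT P R γ μ φ Qstar q) ≤ 2 * εφ := by
  obtain ⟨⟨g, hg, hge⟩, -⟩ := hεφ
  have hb : ∀ q, |g q - Qstar q| ≤ εφ := fun q => by
    rw [← hge]
    exact Finset.le_sup' (fun q => |g q - Qstar q|) (Finset.mem_univ q)
  unfold supNorm
  apply Finset.sup'_le
  intro q _
  have hpos : 0 < ∑ q', if φ q' = φ q then μ q' else 0 := by
    apply Finset.sum_pos'
    · intro i _
      split_ifs
      · exact (hμpos i).le
      · exact le_rfl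
    · exact ⟨q, Finset.mem_univ q, by simpa using hμpos q⟩
  have h1 : projT P R γ μ φ Qstar q ≤ Qstar q + 2 * εφ := by
    unfold projT
    rw [hQstar, div_le_iff₀ hpos, Finset.mul_sum]
    apply Finset.sum_le_sum
    intro i _
    split_ifs with h
    · have e := hg i q h
      have a := abs_le.1 (hb i)
      have b := abs_le.1 (hb q)
      rw [mul_comm]
      exact mul_le_mul_of_nonneg_right (by linarith [a.1, b.2]) (hμpos i).le
    · simp
  have h2 : Qstar q - 2 * εφ ≤ projT P R γ μ φ Qstar q := by
    unfold projT
    rw [hQstar, le_div_iff₀ hpos, Finset.mul_sum]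
    apply Finset.sum_le_sum
    intro i _
    split_ifs with h
    · have e := hg i q h
      have a := abs_le.1 (hb i)
      have b := abs_le.1 (hb q)
      rw [mul_comm (μ i)]
      exact mul_le_mul_of_nonneg_right (by linarith [a.2, b.1]) (hμpos i).le
    · simp
  exact abs_le.2 ⟨by linarith, by linarith⟩
end

section
/- Let (Ω, 𝔽, ℙ) be a probability space, 𝒳 a measurable space, X : Ω → 𝒳 measurable, and Y : Ω → ℝ a random variable with 0 ≤ Y ≤ V almost surely for some constant V > 0. Let h, h⋆ : 𝒳 → [0, V] be measurable, with h⋆ ∘ X being a version of the conditional expectation E[Y | σ(X)]. Define Z := (h(X) − Y)² − (h⋆(X) − Y)². Then (i) E[Z] = E[(h(X) − h⋆(X))²], and (ii) E[Z²] ≤ 4 V² E[Z]; in particular Var[Z] ≤ 4 V² E[Z]. -/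
open MeasureTheory

/-- For a bounded regression problem, with `h⋆ ∘ X` a version of the
conditional expectation `E[Y | σ(X)]` and
`Z := (h(X) − Y)² − (h⋆(X) − Y)²`, one has
(i) `E[Z] = E[(h(X) − h⋆(X))²]`, and (ii) `E[Z²] ≤ 4V² E[Z]`;
in particular `Var[Z] ≤ 4V² E[Z]`. -/
theorem stmt8 {Ω 𝓧 : Type*} [MeasurableSpace Ω] [MeasurableSpace 𝓧]
    (ℙ : Measure Ω) [IsProbabilityMeasure ℙ]
    (X : Ω → 𝓧) (hX : Measurable X)
    (Y : Ω → ℝ) (hY : Measurable Y)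
    (V : ℝ) (hV : 0 < V)
    (hYb : ∀ᵐ ω ∂ℙ, 0 ≤ Y ω ∧ Y ω ≤ V)
    (h hstar : 𝓧 → ℝ) (hh : Measurable h) (hhs : Measurable hstar)
    (hhb : ∀ x, 0 ≤ h x ∧ h x ≤ V) (hhsb : ∀ x, 0 ≤ hstar x ∧ hstar x ≤ V)
    -- `h⋆ ∘ X` is a version of the conditional expectation `E[Y | σ(X)]`
    (hce : (fun ω => hstar (X ω)) =ᵐ[ℙ] ℙ[Y | MeasurableSpace.comap X ‹MeasurableSpace 𝓧›])
    (Z : Ω → ℝ)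
    (hZ : ∀ ω, Z ω = (h (X ω) - Y ω) ^ 2 - (hstar (X ω) - Y ω) ^ 2) :
    -- (i)
    (∫ ω, Z ω ∂ℙ) = ∫ ω, (h (X ω) - hstar (X ω)) ^ 2 ∂ℙ ∧
    -- (ii)
    (∫ ω, (Z ω) ^ 2 ∂ℙ) ≤ 4 * V ^ 2 * ∫ ω, Z ω ∂ℙ ∧
    -- in particular, Var[Z] ≤ 4V² E[Z]
    (∫ ω, (Z ω - ∫ ω', Z ω' ∂ℙ) ^ 2 ∂ℙ) ≤ 4 * V ^ 2 * ∫ ω, Z ω ∂ℙ := by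
  have hm : MeasurableSpace.comap X ‹MeasurableSpace 𝓧› ≤ ‹MeasurableSpace Ω› := hX.comap_le
  have hhX : Measurable (fun ω => h (X ω)) := hh.comp hX
  have hsX : Measurable (fun ω => hstar (X ω)) := hhs.comp hX
  have hZm : Measurable Z := by
    have : Z = fun ω => (h (X ω) - Y ω) ^ 2 - (hstar (X ω) - Y ω) ^ 2 := funext hZ
    rw [this]; fun_prop
  let D : Ω → ℝ := fun ω => h (X ω) - hstar (X ω)
  have hDm : Measurable D := hhX.sub hsX
  have hDb : ∀ ω, |D ω| ≤ V := fun ω => by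
    have h1 := hhb (X ω); have h2 := hhsb (X ω)
    exact abs_le.2 ⟨by simp only [D]; linarith, by simp only [D]; linarith⟩
  have hDs : StronglyMeasurable[MeasurableSpace.comap X ‹MeasurableSpace 𝓧›] D :=
    ((hh.sub hhs).comp (comap_measurable X)).stronglyMeasurable
  have hYi : Integrable Y ℙ := by
    refine Integrable.of_bound hY.aestronglyMeasurable V ?_
    filter_upwards [hYb] with ω hω
    rw [Real.norm_eq_abs]; exact abs_le.2 ⟨by linarith, hω.2⟩
  have hsi : Integrable (fun ω => hstar (X ω)) ℙ := by
    refine Integrable.of_bound hsX.aestronglyMeasurable V (ae_of_all _ fun ω => ?_)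
    have h2 := hhsb (X ω)
    rw [Real.norm_eq_abs]; exact abs_le.2 ⟨by linarith, h2.2⟩
  have hDi : Integrable D ℙ :=
    Integrable.of_bound hDm.aestronglyMeasurable V (ae_of_all _ hDb)
  have hDY : Integrable (fun ω => D ω * Y ω) ℙ :=
    hYi.bdd_mul hDm.aestronglyMeasurable (ae_of_all _ hDb)
  have hDs' : Integrable (fun ω => D ω * hstar (X ω)) ℙ :=
    hsi.bdd_mul hDm.aestronglyMeasurable (ae_of_all _ hDb)
  have hDD : Integrable (fun ω => D ω ^ 2) ℙ := by
    simpa only [sq] using hDi.bdd_mul hDm.aestronglyMeasurable (ae_of_all _ hDb)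
  have key : ∫ ω, D ω * Y ω ∂ℙ = ∫ ω, D ω * hstar (X ω) ∂ℙ := by
    have h1 := condExp_stronglyMeasurable_mul_of_bound hm hDs hYi V (ae_of_all _ hDb)
    have h2 := integral_condExp (μ := ℙ) (f := D * Y) hm
    change ∫ ω, (D * Y) ω ∂ℙ = _
    rw [← h2]
    refine integral_congr_ae ?_
    filter_upwards [h1, hce] with ω a b
    rw [a, Pi.mul_apply, ← b]
  have hi : (∫ ω, Z ω ∂ℙ) = ∫ ω, D ω ^ 2 ∂ℙ := by
    have e : ∀ ω, Z ω = D ω ^ 2 + 2 * (D ω * hstar (X ω) - D ω * Y ω) := fun ω => by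
      rw [hZ]; simp only [D]; ring
    have hsub : Integrable (fun ω => D ω * hstar (X ω) - D ω * Y ω) ℙ := hDs'.sub hDY
    simp_rw [e]
    rw [integral_add hDD (hsub.const_mul 2), integral_const_mul, integral_sub hDs' hDY, key]
    ring
  have hii : (∫ ω, (Z ω) ^ 2 ∂ℙ) ≤ 4 * V ^ 2 * ∫ ω, Z ω ∂ℙ := by
    rw [hi, ← integral_const_mul]
    refine integral_mono_of_nonneg (ae_of_all _ fun ω => sq_nonneg _) (hDD.const_mul _) ?_
    filter_upwards [hYb] with ω hω
    have h1 := hhb (X ω)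
    have h2 := hhsb (X ω)
    have e : Z ω ^ 2 = (h (X ω) + hstar (X ω) - 2 * Y ω) ^ 2 * D ω ^ 2 := by
      rw [hZ]; simp only [D]; ring
    have hb : (h (X ω) + hstar (X ω) - 2 * Y ω) ^ 2 ≤ (2 * V) ^ 2 :=
      sq_le_sq' (by linarith) (by linarith)
    change Z ω ^ 2 ≤ 4 * V ^ 2 * D ω ^ 2
    rw [e]
    exact mul_le_mul_of_nonneg_right (by linarith) (sq_nonneg _)
  refine ⟨hi, hii, le_trans ?_ hii⟩
  rw [← ProbabilityTheory.variance_eq_integral hZm.aemeasurable]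
  exact ProbabilityTheory.variance_le_expectation_sq hZm.aestronglyMeasurable
end

section
/- Let (X, Y) be a random pair with X taking values in a measurable space 𝒳 and 0 ≤ Y ≤ V almost surely. Let H be a class of measurable functions 𝒳 → [0, V] that contains the regression function h⋆ (i.e., h⋆ ∘ X is a version of E[Y | σ(X)]). Suppose there is a finite subset H' ⊆ H of cardinality N that is an ε₀-cover of H under the sup norm: for every h ∈ H there exists h' ∈ H' with sup_x |h(x) − h'(x)| ≤ ε₀. Let ((X₁, Y₁), …, (Xₙ, Yₙ)) be i.i.d. copies of (X, Y), and let ĥ be any measurable empirical risk minimizer, i.e., ĥ takes values in H and \sum_{i=1}^n (ĥ(Xᵢ) − Yᵢ)² ≤ \sum_{i=1}^n (h(Xᵢ) − Yᵢ)² for all h ∈ H. Then with probability at least 1 − δ, E_X[(ĥ(X) − h⋆(X))²] ≤ 22 V² log(N/δ) / (3n) + 8 V ε₀, where E_X denotes expectation over a fresh draw of X with ĥ fixed. -/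
open MeasureTheory

lemma aux_exp (u : ℝ) (hu : |u| ≤ 1) : Real.exp u ≤ 1 + u + 3 / 4 * u ^ 2 := by
  have h := Real.exp_bound hu (n := 3) (by norm_num)
  simp only [Finset.sum_range_succ, Finset.sum_range_zero, Nat.factorial] at h
  norm_num at h
  have h2 := (abs_le.1 h).2
  have h3 : |u| ^ 3 ≤ u ^ 2 := by
    rw [pow_succ, sq_abs]
    nlinarith [sq_nonneg u]
  nlinarith [sq_nonneg u]

lemma aux_mgf {Ω : Type*} [MeasurableSpace Ω] (ρ : Measure Ω) [IsProbabilityMeasure ρ]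
    (V : ℝ) (hV : 0 < V) (Z : Ω → ℝ) (hZ : Measurable Z) (hb : ∀ᵐ p ∂ρ, |Z p| ≤ V ^ 2)
    (R : ℝ) (hR : 0 ≤ R) (h1 : ∫ p, Z p ∂ρ = R) (h2 : ∫ p, Z p ^ 2 ∂ρ ≤ 2 * V ^ 2 * R)
    (l : ℝ) (hl : l * V ^ 2 = 3 / 11) :
    Integrable (fun p => Real.exp (-(l * Z p))) ρ ∧
    ∫ p, Real.exp (-(l * Z p)) ∂ρ ≤ Real.exp (-(l * R / 2)) := by
  have hV2 : 0 < V ^ 2 := by positivity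
  have hl0 : 0 < l := by
    by_contra hc
    push Not at hc
    nlinarith
  have hbd : ∀ᵐ p ∂ρ, |-(l * Z p)| ≤ 3 / 11 := by
    filter_upwards [hb] with p hp
    rw [abs_neg, abs_mul, abs_of_pos hl0, ← hl]
    gcongr
  have iZ : Integrable Z ρ := by
    refine Integrable.of_bound hZ.aestronglyMeasurable (V ^ 2) ?_
    simpa using hb
  have iZ2 : Integrable (fun p => Z p ^ 2) ρ := by
    refine Integrable.of_bound (hZ.pow_const 2).aestronglyMeasurable ((V ^ 2) ^ 2) ?_
    filter_upwards [hb] with p hp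
    rw [norm_pow, Real.norm_eq_abs]
    gcongr
  have iE : Integrable (fun p => Real.exp (-(l * Z p))) ρ := by
    refine Integrable.of_bound (by fun_prop) (Real.exp (3 / 11)) ?_
    filter_upwards [hbd] with p hp
    rw [Real.norm_eq_abs, Real.abs_exp, Real.exp_le_exp]
    exact (abs_le.1 hp).2
  refine ⟨iE, ?_⟩
  have iq : Integrable (fun p => 1 - l * Z p + 3 / 4 * l ^ 2 * Z p ^ 2) ρ :=
    ((integrable_const 1).sub (iZ.const_mul l)).add (iZ2.const_mul _)
  have step : ∫ p, Real.exp (-(l * Z p)) ∂ρ ≤ ∫ p, (1 - l * Z p + 3 / 4 * l ^ 2 * Z p ^ 2) ∂ρ := by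
    refine integral_mono_ae iE iq ?_
    filter_upwards [hbd] with p hp
    have := aux_exp (-(l * Z p)) (by linarith)
    nlinarith
  have comp : ∫ p, (1 - l * Z p + 3 / 4 * l ^ 2 * Z p ^ 2) ∂ρ
      = 1 - l * R + 3 / 4 * l ^ 2 * ∫ p, Z p ^ 2 ∂ρ := by
    have i1 : Integrable (fun p => 1 - l * Z p) ρ := (integrable_const 1).sub (iZ.const_mul l)
    rw [integral_add i1 (iZ2.const_mul _),
      integral_sub (integrable_const 1) (iZ.const_mul l), integral_const_mul, integral_const_mul, h1]
    simp
  rw [comp] at step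
  have h4 : 3 / 4 * l ^ 2 * ∫ p, Z p ^ 2 ∂ρ ≤ 3 / 4 * l ^ 2 * (2 * V ^ 2 * R) := by gcongr
  have h5 : 3 / 4 * l ^ 2 * (2 * V ^ 2 * R) = 9 / 22 * (l * R) := by
    linear_combination (3 / 2 * l * R) * hl
  have h6 := Real.add_one_le_exp (-(l * R / 2))
  have : 0 ≤ l * R := by positivity
  linarith

lemma aux_chernoff {Ω : Type*} [MeasurableSpace Ω] (ρ : Measure Ω) [IsProbabilityMeasure ρ]
    (V : ℝ) (hV : 0 < V) (Z : Ω → ℝ) (hZ : Measurable Z) (hb : ∀ᵐ p ∂ρ, |Z p| ≤ V ^ 2)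
    (R : ℝ) (hR : 0 ≤ R) (h1 : ∫ p, Z p ∂ρ = R) (h2 : ∫ p, Z p ^ 2 ∂ρ ≤ 2 * V ^ 2 * R)
    (n : ℕ) (hn : 0 < n) (L : ℝ) :
    (Measure.pi fun _ : Fin n => ρ).real
      {D | ∑ i, Z (D i) ≤ n * (R - 22 * V ^ 2 * L / (3 * n)) / 2} ≤ Real.exp (-L) := by
  obtain ⟨l, hl⟩ : ∃ l : ℝ, l * V ^ 2 = 3 / 11 := ⟨3 / 11 / V ^ 2, by field_simp⟩
  have hl0 : 0 < l := by
    by_contra hc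
    push Not at hc
    have : 0 < V ^ 2 := by positivity
    nlinarith
  obtain ⟨iE, hE⟩ := aux_mgf ρ V hV Z hZ hb R hR h1 h2 l hl
  have hprod : ∀ D : Fin n → Ω, Real.exp (-l * ∑ i, Z (D i)) = ∏ i, Real.exp (-(l * Z (D i))) := by
    intro D
    rw [← Real.exp_sum, Finset.mul_sum]
    simp
  have key := ProbabilityTheory.measure_le_le_exp_mul_mgf (μ := Measure.pi fun _ : Fin n => ρ)
    (X := fun D => ∑ i, Z (D i)) (t := -l) (n * (R - 22 * V ^ 2 * L / (3 * n)) / 2)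
    (by linarith) (by
      simp only [hprod]
      exact Integrable.fintype_prod (f := fun _ : Fin n => fun p => Real.exp (-(l * Z p)))
        (fun _ => iE))
  refine key.trans ?_
  have hm : ProbabilityTheory.mgf (fun D : Fin n → Ω => ∑ i, Z (D i))
      (Measure.pi fun _ : Fin n => ρ) (-l) ≤ Real.exp (-(l * R / 2)) ^ n := by
    unfold ProbabilityTheory.mgf
    simp only [hprod]
    rw [integral_fintype_prod_eq_prod (fun _ : Fin n => fun p => Real.exp (-(l * Z p)))]
    simp only [Finset.prod_const, Finset.card_univ, Fintype.card_fin]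
    exact pow_le_pow_left₀ (integral_nonneg fun _ => (Real.exp_pos _).le) hE n
  refine (mul_le_mul_of_nonneg_left hm (Real.exp_pos _).le).trans ?_
  rw [← Real.exp_nat_mul, ← Real.exp_add]
  apply le_of_eq
  congr 1
  have hn' : (n : ℝ) ≠ 0 := by positivity
  field_simp
  linear_combination (-(22 * L)) * hl

lemma aux_orth {𝓧 : Type*} [mX : MeasurableSpace 𝓧]
    (ρ : Measure (𝓧 × ℝ)) [IsProbabilityMeasure ρ]
    (V : ℝ) (hYb : ∀ᵐ p ∂ρ, 0 ≤ p.2 ∧ p.2 ≤ V)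
    (hstar : 𝓧 → ℝ)
    (hce : (fun p : 𝓧 × ℝ => hstar p.1) =ᵐ[ρ]
      ρ[(fun p : 𝓧 × ℝ => p.2) | MeasurableSpace.comap Prod.fst mX])
    (k : 𝓧 → ℝ) (hk : Measurable k) (C : ℝ) (hC : ∀ x, |k x| ≤ C) :
    ∫ p, k p.1 * p.2 ∂ρ = ∫ p, k p.1 * hstar p.1 ∂ρ := by
  have hY : ∀ᵐ p ∂ρ, ‖p.2‖ ≤ V := by
    filter_upwards [hYb] with p hp
    rw [Real.norm_eq_abs, abs_of_nonneg hp.1]; exact hp.2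
  have iY : Integrable (fun p : 𝓧 × ℝ => p.2) ρ :=
    Integrable.of_bound measurable_snd.aestronglyMeasurable V hY
  have iF : Integrable ((fun p : 𝓧 × ℝ => k p.1) * (fun p : 𝓧 × ℝ => p.2)) ρ := by
    refine iY.bdd_mul (c := C) (hk.comp measurable_fst).aestronglyMeasurable ?_
    exact Filter.Eventually.of_forall fun p => hC p.1
  have hm : MeasurableSpace.comap Prod.fst mX ≤ (inferInstance : MeasurableSpace (𝓧 × ℝ)) :=
    measurable_fst.comap_le
  have hs : StronglyMeasurable[MeasurableSpace.comap Prod.fst mX] (fun p : 𝓧 × ℝ => k p.1) :=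
    (hk.comp (comap_measurable Prod.fst)).stronglyMeasurable
  have := condExp_mul_of_stronglyMeasurable_left hs iF iY
  have e := integral_condExp (μ := ρ) (f := (fun p : 𝓧 × ℝ => k p.1) * (fun p : 𝓧 × ℝ => p.2)) hm
  rw [show (fun p : 𝓧 × ℝ => k p.1 * p.2) =
    (fun p : 𝓧 × ℝ => k p.1) * (fun p : 𝓧 × ℝ => p.2) from rfl, ← e]
  apply integral_congr_ae
  filter_upwards [this, hce] with p h1 h2
  rw [h1, Pi.mul_apply, h2]

lemma aux_moments {𝓧 : Type*} [mX : MeasurableSpace 𝓧]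
    (ρ : Measure (𝓧 × ℝ)) [IsProbabilityMeasure ρ]
    (V : ℝ) (hV : 0 < V) (hYb : ∀ᵐ p ∂ρ, 0 ≤ p.2 ∧ p.2 ≤ V)
    (s : 𝓧 → ℝ) (hs : Measurable s) (hsb : ∀ x, 0 ≤ s x ∧ s x ≤ V)
    (hce : (fun p : 𝓧 × ℝ => s p.1) =ᵐ[ρ]
      ρ[(fun p : 𝓧 × ℝ => p.2) | MeasurableSpace.comap Prod.fst mX])
    (h : 𝓧 → ℝ) (hh : Measurable h) (hhb : ∀ x, 0 ≤ h x ∧ h x ≤ V) :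
    (∀ᵐ p ∂ρ, |(h p.1 - p.2) ^ 2 - (s p.1 - p.2) ^ 2| ≤ V ^ 2) ∧
    ∫ p, ((h p.1 - p.2) ^ 2 - (s p.1 - p.2) ^ 2) ∂ρ = ∫ p, (h p.1 - s p.1) ^ 2 ∂ρ ∧
    ∫ p, ((h p.1 - p.2) ^ 2 - (s p.1 - p.2) ^ 2) ^ 2 ∂ρ
      ≤ 2 * V ^ 2 * ∫ p, (h p.1 - s p.1) ^ 2 ∂ρ := by
  have hbd : ∀ᵐ p ∂ρ, |(h p.1 - p.2) ^ 2 - (s p.1 - p.2) ^ 2| ≤ V ^ 2 := by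
    filter_upwards [hYb] with p hp
    obtain ⟨a, b⟩ := hp
    obtain ⟨c, d⟩ := hhb p.1
    obtain ⟨e, f⟩ := hsb p.1
    have q1 : (h p.1 - p.2) ^ 2 ≤ V ^ 2 := sq_le_sq' (by linarith) (by linarith)
    have q2 : (s p.1 - p.2) ^ 2 ≤ V ^ 2 := sq_le_sq' (by linarith) (by linarith)
    rw [abs_le]
    constructor <;> nlinarith [sq_nonneg (h p.1 - p.2), sq_nonneg (s p.1 - p.2)]
  have dbd : ∀ x, |h x - s x| ≤ V := by
    intro x
    obtain ⟨c, d⟩ := hhb x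
    obtain ⟨e, f⟩ := hsb x
    rw [abs_le]; constructor <;> linarith
  have d2bd : ∀ x, (h x - s x) ^ 2 ≤ V ^ 2 := fun x => by
    obtain ⟨c, d⟩ := abs_le.1 (dbd x)
    exact sq_le_sq' c d
  have iY : Integrable (fun p : 𝓧 × ℝ => p.2) ρ := by
    refine Integrable.of_bound measurable_snd.aestronglyMeasurable V ?_
    filter_upwards [hYb] with p hp
    rw [Real.norm_eq_abs, abs_of_nonneg hp.1]; exact hp.2
  -- functions of x
  have iX : ∀ (k : 𝓧 → ℝ), Measurable k → ∀ C, (∀ x, |k x| ≤ C) →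
      Integrable (fun p : 𝓧 × ℝ => k p.1) ρ := by
    intro k hk C hC
    exact Integrable.of_bound (hk.comp measurable_fst).aestronglyMeasurable C
      (Filter.Eventually.of_forall fun p => hC p.1)
  -- orthogonality
  have orth : ∀ (k : 𝓧 → ℝ), Measurable k → ∀ C, (∀ x, |k x| ≤ C) →
      Integrable (fun p : 𝓧 × ℝ => k p.1 * (p.2 - s p.1)) ρ ∧
      ∫ p, k p.1 * (p.2 - s p.1) ∂ρ = 0 := by
    intro k hk C hC
    have i1 : Integrable (fun p : 𝓧 × ℝ => k p.1 * p.2) ρ :=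
      iY.bdd_mul (c := C) (hk.comp measurable_fst).aestronglyMeasurable
        (Filter.Eventually.of_forall fun p => hC p.1)
    have i2 : Integrable (fun p : 𝓧 × ℝ => k p.1 * s p.1) ρ :=
      (iX s hs V (fun x => by rw [abs_of_nonneg (hsb x).1]; exact (hsb x).2)).bdd_mul (c := C)
        (hk.comp measurable_fst).aestronglyMeasurable
        (Filter.Eventually.of_forall fun p => hC p.1)
    have e : (fun p : 𝓧 × ℝ => k p.1 * (p.2 - s p.1)) =
      fun p : 𝓧 × ℝ => k p.1 * p.2 - k p.1 * s p.1 := by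
      funext p; ring
    rw [e]
    refine ⟨i1.sub i2, ?_⟩
    rw [integral_sub i1 i2, aux_orth ρ V hYb s hce k hk C hC, sub_self]
  have iD : Integrable (fun p : 𝓧 × ℝ => (h p.1 - s p.1) ^ 2) ρ :=
    iX (fun x => (h x - s x) ^ 2) (by fun_prop) (V ^ 2) (fun x => by
      rw [abs_of_nonneg (sq_nonneg _)]; exact d2bd x)
  refine ⟨hbd, ?_, ?_⟩
  · obtain ⟨i, o⟩ := orth (fun x => -2 * (h x - s x)) (by fun_prop) (2 * V) (fun x => by
      rw [abs_mul]; norm_num; exact dbd x)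
    have e : (fun p : 𝓧 × ℝ => (h p.1 - p.2) ^ 2 - (s p.1 - p.2) ^ 2) =
      fun p => (h p.1 - s p.1) ^ 2 + -2 * (h p.1 - s p.1) * (p.2 - s p.1) := by
      funext p; ring
    rw [e, integral_add iD i, o, add_zero]
  · -- pointwise bound by 2 V² d² + k(x) (y - s)
    obtain ⟨i, o⟩ := orth
      (fun x => 4 * (h x - s x) ^ 2 * (V - 2 * s x) - 4 * (h x - s x) ^ 3) (by fun_prop)
      (4 * V ^ 2 * V + 4 * V ^ 3) (fun x => by
        obtain ⟨a, b⟩ := hsb x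
        refine (abs_sub _ _).trans ?_
        rw [abs_mul, abs_mul, abs_mul, abs_pow, abs_pow]
        have q : |V - 2 * s x| ≤ V := by rw [abs_le]; constructor <;> linarith
        have := dbd x
        simp only [Nat.abs_ofNat]
        gcongr)
    have e : ∫ p, (2 * V ^ 2 * (h p.1 - s p.1) ^ 2 +
        (4 * (h p.1 - s p.1) ^ 2 * (V - 2 * s p.1) - 4 * (h p.1 - s p.1) ^ 3) * (p.2 - s p.1)) ∂ρ
        = 2 * V ^ 2 * ∫ p, (h p.1 - s p.1) ^ 2 ∂ρ := by
      rw [integral_add (iD.const_mul _) i, o, add_zero, integral_const_mul]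
    rw [← e]
    refine integral_mono_ae ?_ ((iD.const_mul _).add i) ?_
    · refine Integrable.of_bound (Measurable.aestronglyMeasurable (by fun_prop)) ((V ^ 2) ^ 2) ?_
      filter_upwards [hbd] with p hp
      rw [norm_pow, Real.norm_eq_abs]
      gcongr
    · filter_upwards [hYb] with p hp
      have h2 := d2bd p.1
      obtain ⟨a, b⟩ := hp
      generalize h p.1 = u at *
      generalize s p.1 = w at *
      generalize p.2 = y at *
      -- Z = d² - 2 d (y - w);  Z² = d⁴ - 4 d³ (y-w) + 4 d² (y-w)²
      have q1 : (y - w) ^ 2 ≤ (V - 2 * w) * (y - w) + V ^ 2 / 4 := by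
        nlinarith [sq_nonneg (V - 2 * w), mul_nonneg a (sub_nonneg.2 b)]
      have q2 := mul_le_mul_of_nonneg_left q1 (sq_nonneg (u - w))
      have q3 := mul_le_mul_of_nonneg_left h2 (sq_nonneg (u - w))
      nlinarith

/-- (Least-squares generalization error bound.)  Let `ρ` be the joint
law of `(X, Y)` with `0 ≤ Y ≤ V` a.s., `H` a class of measurable `[0,V]`-valued
functions containing the regression function `h⋆`, and `H' ⊆ H` a finite `ε₀`-cover
of `H` of cardinality `N` under the sup norm.  If `ĥ` is an empirical risk minimizer
over `H` computed from `n` i.i.d. samples, then with probability at least `1 − δ`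
over the samples,
`E_X[(ĥ(X) − h⋆(X))²] ≤ 22 V² log(N/δ)/(3n) + 8 V ε₀`. -/
theorem stmt9 {𝓧 : Type*} [MeasurableSpace 𝓧]
    (ρ : Measure (𝓧 × ℝ)) [IsProbabilityMeasure ρ]
    (V : ℝ) (hV : 0 < V)
    (hYb : ∀ᵐ p ∂ρ, 0 ≤ p.2 ∧ p.2 ≤ V)
    (H : Set (𝓧 → ℝ))
    (hHmeas : ∀ h ∈ H, Measurable h)
    (hHb : ∀ h ∈ H, ∀ x, 0 ≤ h x ∧ h x ≤ V)
    (hstar : 𝓧 → ℝ) (hstarH : hstar ∈ H)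
    -- `h⋆ ∘ X` is a version of the conditional expectation `E[Y | σ(X)]`
    (hce : (fun p : 𝓧 × ℝ => hstar p.1) =ᵐ[ρ]
      ρ[(fun p : 𝓧 × ℝ => p.2) | MeasurableSpace.comap Prod.fst ‹MeasurableSpace 𝓧›])
    -- `H'` is a finite `ε₀`-cover of `H` of cardinality `N` under the sup norm
    (H' : Set (𝓧 → ℝ)) (hH'sub : H' ⊆ H) (hH'fin : H'.Finite)
    (N : ℕ) (hN : Nat.card H' = N)
    (ε₀ : ℝ) (hε₀ : 0 ≤ ε₀)
    (hcover : ∀ h ∈ H, ∃ h' ∈ H', ∀ x, |h x - h' x| ≤ ε₀)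
    (n : ℕ) (hn : 0 < n)
    (δ : ℝ) (hδ : 0 < δ) (hδ1 : δ < 1)
    -- `ĥ` is an empirical risk minimizer over `H`
    (hhat : (Fin n → 𝓧 × ℝ) → (𝓧 → ℝ))
    (hhatH : ∀ D, hhat D ∈ H)
    (hERM : ∀ D : Fin n → 𝓧 × ℝ, ∀ h ∈ H,
      ∑ i, (hhat D (D i).1 - (D i).2) ^ 2 ≤ ∑ i, (h (D i).1 - (D i).2) ^ 2) :
    (Measure.pi fun _ : Fin n => ρ)
      {D | ∫ p, (hhat D p.1 - hstar p.1) ^ 2 ∂ρ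
            ≤ 22 * V ^ 2 * Real.log (N / δ) / (3 * n) + 8 * V * ε₀}
      ≥ ENNReal.ofReal (1 - δ) := by
  classical
  set μ := Measure.pi fun _ : Fin n => ρ with hμ
  set L := Real.log (N / δ) with hL
  set R : (𝓧 → ℝ) → ℝ := fun h => ∫ p, (h p.1 - hstar p.1) ^ 2 ∂ρ with hRdef
  have hNpos : 0 < N := by
    obtain ⟨h', hh', _⟩ := hcover hstar hstarH
    haveI := hH'fin.to_subtype
    haveI : Nonempty H' := ⟨⟨h', hh'⟩⟩
    rw [← hN]
    exact Nat.card_pos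
  have hNr : (0 : ℝ) < N := by exact_mod_cast hNpos
  have hnr : (0 : ℝ) < n := by exact_mod_cast hn
  let B : (𝓧 → ℝ) → Set (Fin n → 𝓧 × ℝ) := fun h =>
    {D | ∑ i, ((h (D i).1 - (D i).2) ^ 2 - (hstar (D i).1 - (D i).2) ^ 2)
      ≤ n * (R h - 22 * V ^ 2 * L / (3 * n)) / 2}
  have hsm := hHmeas _ hstarH
  have hB : ∀ h ∈ H, μ (B h) ≤ ENNReal.ofReal (δ / N) := by
    intro h hh
    have hm := hHmeas h hh
    obtain ⟨m1, m2, m3⟩ := aux_moments ρ V hV hYb hstar hsm (hHb _ hstarH) hce h hm (hHb h hh)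
    have := aux_chernoff ρ V hV (fun p => (h p.1 - p.2) ^ 2 - (hstar p.1 - p.2) ^ 2)
      (by fun_prop) m1 (R h) (integral_nonneg fun _ => sq_nonneg _) m2 m3 n hn L
    rw [hL, Real.exp_neg, Real.exp_log (by positivity), inv_div] at this
    rw [← ofReal_measureReal]
    exact ENNReal.ofReal_le_ofReal this
  let U : Set (Fin n → 𝓧 × ℝ) := ⋃ h ∈ hH'fin.toFinset, B h
  have hU : μ U ≤ ENNReal.ofReal δ := by
    refine (measure_biUnion_finset_le _ _).trans ?_
    refine (Finset.sum_le_sum (g := fun _ => ENNReal.ofReal (δ / N)) fun h hh =>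
      hB h (hH'sub (hH'fin.mem_toFinset.1 hh))).trans ?_
    have hc : hH'fin.toFinset.card = N := by
      rw [← hN, Nat.card_coe_set_eq, Set.ncard_eq_toFinset_card H' hH'fin]
    rw [Finset.sum_const, hc, nsmul_eq_mul, ← ENNReal.ofReal_natCast,
      ← ENNReal.ofReal_mul hNr.le]
    apply le_of_eq
    congr 1
    field_simp
  have hUm : MeasurableSet U := by
    refine Finset.measurableSet_biUnion _ fun h hh => ?_
    have hm := hHmeas h (hH'sub (hH'fin.mem_toFinset.1 hh))
    exact measurableSet_le (by fun_prop) measurable_const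
  have hY : ∀ᵐ D ∂μ, ∀ i, 0 ≤ (D i).2 ∧ (D i).2 ≤ V := by
    rw [ae_all_iff]
    intro i
    exact (measurePreserving_eval (fun _ : Fin n => ρ) i).quasiMeasurePreserving.ae hYb
  have hcomp : ENNReal.ofReal (1 - δ) ≤ μ Uᶜ := by
    rw [prob_compl_eq_one_sub hUm, ENNReal.ofReal_sub _ hδ.le, ENNReal.ofReal_one]
    exact tsub_le_tsub_left hU 1
  refine hcomp.trans (measure_mono_ae ?_)
  filter_upwards [hY] with D hD hDU
  change R (hhat D) ≤ _
  obtain ⟨h', hh', hc⟩ := hcover (hhat D) (hhatH D)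
  have hh'H := hH'sub hh'
  have hnot : ¬ (D ∈ B h') := fun hb => hDU (Set.mem_biUnion (hH'fin.mem_toFinset.2 hh') hb)
  simp only [B, Set.mem_setOf_eq, not_le] at hnot
  have hemp : ∑ i, ((h' (D i).1 - (D i).2) ^ 2 - (hstar (D i).1 - (D i).2) ^ 2)
      ≤ n * (2 * V * ε₀) := by
    have e1 := hERM D hstar hstarH
    have e2 : ∑ i, ((h' (D i).1 - (D i).2) ^ 2 - (hhat D (D i).1 - (D i).2) ^ 2)
        ≤ ∑ _i : Fin n, (2 * V * ε₀) := by
      refine Finset.sum_le_sum fun i _ => ?_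
      obtain ⟨a, b⟩ := hD i
      obtain ⟨c, d⟩ := hHb _ hh'H (D i).1
      obtain ⟨e, f⟩ := hHb _ (hhatH D) (D i).1
      have g := hc (D i).1
      have q : |h' (D i).1 + hhat D (D i).1 - 2 * (D i).2| ≤ 2 * V := by
        rw [abs_le]; constructor <;> linarith
      rw [abs_sub_comm] at g
      calc _ = (h' (D i).1 + hhat D (D i).1 - 2 * (D i).2) * (h' (D i).1 - hhat D (D i).1) := by ring
        _ ≤ |h' (D i).1 + hhat D (D i).1 - 2 * (D i).2| * |h' (D i).1 - hhat D (D i).1| := by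
          rw [← abs_mul]; exact le_abs_self _
        _ ≤ _ := by gcongr
    rw [Finset.sum_sub_distrib] at e2 ⊢
    simp only [Finset.sum_const, Finset.card_univ, Fintype.card_fin, nsmul_eq_mul] at e2
    linarith
  have iD : ∀ h ∈ H, Integrable (fun p : 𝓧 × ℝ => (h p.1 - hstar p.1) ^ 2) ρ := by
    intro h hh
    have hm := hHmeas h hh
    refine Integrable.of_bound (Measurable.aestronglyMeasurable (by fun_prop)) (V ^ 2) ?_
    refine Filter.Eventually.of_forall fun p => ?_
    obtain ⟨c, d⟩ := hHb _ hh p.1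
    obtain ⟨e, f⟩ := hHb _ hstarH p.1
    rw [Real.norm_eq_abs, abs_of_nonneg (sq_nonneg _)]
    exact sq_le_sq' (by linarith) (by linarith)
  have hpop : R (hhat D) ≤ R h' + 2 * V * ε₀ := by
    have : R h' + 2 * V * ε₀ = ∫ p, ((h' p.1 - hstar p.1) ^ 2 + 2 * V * ε₀) ∂ρ := by
      rw [integral_add (iD _ hh'H) (integrable_const _)]
      simp [hRdef]
    rw [this]
    refine integral_mono (iD _ (hhatH D)) ((iD _ hh'H).add (integrable_const _)) fun p => ?_
    obtain ⟨c, d⟩ := hHb _ hh'H p.1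
    obtain ⟨e, f⟩ := hHb _ (hhatH D) p.1
    obtain ⟨a, b⟩ := hHb _ hstarH p.1
    have g := hc p.1
    have q : |hhat D p.1 + h' p.1 - 2 * hstar p.1| ≤ 2 * V := by
      rw [abs_le]; constructor <;> linarith
    have : (hhat D p.1 + h' p.1 - 2 * hstar p.1) * (hhat D p.1 - h' p.1) ≤ 2 * V * ε₀ :=
      calc _ ≤ |hhat D p.1 + h' p.1 - 2 * hstar p.1| * |hhat D p.1 - h' p.1| := by
            rw [← abs_mul]; exact le_abs_self _
        _ ≤ _ := by gcongr
    simp only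
    linarith
  have h3 : n * (R h' - 22 * V ^ 2 * L / (3 * n)) / 2 < n * (2 * V * ε₀) := hnot.trans_le hemp
  have h4 : R h' - 22 * V ^ 2 * L / (3 * n) < 4 * V * ε₀ := by
    by_contra hcon
    push Not at hcon
    have := mul_le_mul_of_nonneg_left hcon hnr.le
    linarith
  have : 0 ≤ V * ε₀ := by positivity
  linarith
end

section
/- Let D = ((s₁,a₁,r₁,s'₁), …, (sₙ,aₙ,rₙ,s'ₙ)) be n i.i.d. tuples with (sᵢ,aᵢ) ∼ μ, rᵢ = R(sᵢ,aᵢ), and s'ᵢ ∼ P(·|sᵢ,aᵢ). Fix f : S × A → [0, V_max], δ ∈ (0,1), and 0 < ε̃ ≤ V_max. Let |φ| denote the number of nonempty aggregation cells of φ, and let T̂_φ^μ f be any function on S × A that, on every cell containing at least one datapoint, equals the average of rᵢ + γ V_f(s'ᵢ) over the datapoints (sᵢ,aᵢ) in that cell, and takes an arbitrary value in [0, V_max] on cells containing no datapoint. If n ≥ 16 V_max² (|φ| log(16 V_max²/ε̃²) + log(2/δ)) / ε̃², then with probability at least 1 − δ/2, ‖T̂_φ^μ f − T_φ^μ f‖_{2,μ}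 ≤ ε̃. -/
open MeasureTheory

lemma aux_union {Ω W : Type*} [Fintype Ω] [MeasurableSpace Ω] [MeasurableSingletonClass Ω]
    [Fintype W] (ρ : Measure Ω) [IsProbabilityMeasure ρ] (n : ℕ) (g : W → Ω → ℝ) (L η : ℝ)
    (hg : ∀ w, ∫ x, Real.exp (g w x) ∂ρ ≤ 1)
    (hW : (Fintype.card W : ℝ) * Real.exp (-L) ≤ η) :
    (Measure.pi fun _ : Fin n => ρ) {D | ∀ w, ∑ i, g w (D i) ≤ L} ≥ ENNReal.ofReal (1 - η) := by
  set Q := Measure.pi fun _ : Fin n => ρ with hQ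
  have hone : ∀ w, Q.real {D | L ≤ ∑ i, g w (D i)} ≤ Real.exp (-L) := by
    intro w
    have h := ProbabilityTheory.measure_ge_le_exp_mul_mgf (μ := Q)
      (X := fun D : Fin n → Ω => ∑ i, g w (D i)) (t := 1) L zero_le_one Integrable.of_finite
    have h2 : ProbabilityTheory.mgf (fun D : Fin n → Ω => ∑ i, g w (D i)) Q 1 ≤ 1 := by
      unfold ProbabilityTheory.mgf
      simp only [one_mul, Real.exp_sum]
      rw [hQ, integral_fintype_prod_eq_prod (fun _ x => Real.exp (g w x))]
      exact Finset.prod_le_one (fun i _ => integral_nonneg fun x => (Real.exp_pos _).le)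
        (fun i _ => hg w)
    refine h.trans ?_
    rw [neg_one_mul]
    exact mul_le_of_le_one_right (Real.exp_pos _).le h2
  have hsub : {D : Fin n → Ω | ∀ w, ∑ i, g w (D i) ≤ L}ᶜ ⊆
      ⋃ w ∈ (Finset.univ : Finset W), {D | L ≤ ∑ i, g w (D i)} := by
    intro D hD
    simp only [Set.mem_compl_iff, Set.mem_ofPred_eq, not_forall, not_le] at hD
    obtain ⟨w, hw⟩ := hD
    simp only [Set.mem_iUnion]
    exact ⟨w, Finset.mem_univ _, hw.le⟩
  have hbad : Q.real {D : Fin n → Ω | ∀ w, ∑ i, g w (D i) ≤ L}ᶜ ≤ η := by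
    calc _ ≤ Q.real (⋃ w ∈ (Finset.univ : Finset W), {D | L ≤ ∑ i, g w (D i)}) :=
          measureReal_mono hsub (measure_ne_top _ _)
      _ ≤ ∑ w, Q.real {D | L ≤ ∑ i, g w (D i)} := measureReal_biUnion_finset_le _ _
      _ ≤ ∑ w : W, Real.exp (-L) := Finset.sum_le_sum fun w _ => hone w
      _ ≤ η := by simpa using hW
  rw [probReal_compl_eq_one_sub (Set.Finite.measurableSet (Set.toFinite _))] at hbad
  rw [ge_iff_le, ← ofReal_measureReal]
  exact ENNReal.ofReal_le_ofReal (by linarith)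

lemma aux_trunc (V ε e : ℝ) (hε : 0 < ε) (he : |e| ≤ V) :
    ∃ j : ℤ, j ∈ Finset.Icc (-⌊4 * V / ε⌋) ⌊4 * V / ε⌋ ∧
      0 ≤ (ε / 4 * j) * (e - ε / 4 * j) ∧ |e - ε / 4 * j| ≤ ε / 4 := by
  have key : ∀ e : ℝ, 0 ≤ e → e ≤ V → ∃ j : ℤ, 0 ≤ j ∧ j ≤ ⌊4 * V / ε⌋ ∧
      0 ≤ e - ε / 4 * j ∧ e - ε / 4 * j ≤ ε / 4 := by
    intro e h0 h1
    refine ⟨⌊4 * e / ε⌋, Int.floor_nonneg.2 (by positivity), Int.floor_le_floor (by gcongr), ?_, ?_⟩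
    · have := Int.floor_le (4 * e / ε)
      rw [le_div_iff₀ hε] at this
      linarith
    · have := Int.lt_floor_add_one (4 * e / ε)
      rw [div_lt_iff₀ hε] at this
      linarith
  rcases le_total 0 e with h | h
  · obtain ⟨j, h1, h2, h3, h4⟩ := key e h (by rwa [abs_of_nonneg h] at he)
    have h1' : (0 : ℝ) ≤ j := by exact_mod_cast h1
    refine ⟨j, Finset.mem_Icc.2 ⟨by lia, h2⟩, by positivity, by rwa [abs_of_nonneg h3]⟩
  · obtain ⟨j, h1, h2, h3, h4⟩ := key (-e) (by linarith) (by rwa [abs_of_nonpos h] at he)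
    have h1' : (0 : ℝ) ≤ j := by exact_mod_cast h1
    refine ⟨-j, Finset.mem_Icc.2 ⟨by lia, by lia⟩, ?_, ?_⟩
    · push_cast
      have : 0 ≤ (ε / 4 * j) * (-e - ε / 4 * j) := by positivity
      linarith
    · push_cast
      rw [abs_of_nonpos (by linarith)]; linarith

/-- Orthogonality of the residual of the cellwise average. -/
lemma aux_orth_s10 {Q X : Type*} [Fintype Q] [DecidableEq X] (φ : Q → X) (μ h : Q → ℝ)
    (hμ : ∀ q, 0 < μ q) (U : X → ℝ) :
    ∑ q, μ q * (U (φ q) * (h q - (∑ q', if φ q' = φ q then μ q' * h q' else 0)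
         / (∑ q', if φ q' = φ q then μ q' else 0))) = 0 := by
  classical
  rw [← Finset.sum_fiberwise_of_maps_to (s := Finset.univ) (t := Finset.univ.image φ) (g := φ)
    (fun q _ => Finset.mem_image_of_mem _ (Finset.mem_univ _))]
  refine Finset.sum_eq_zero fun x hx => ?_
  obtain ⟨q0, -, rfl⟩ := Finset.mem_image.1 hx
  have hpos : 0 < ∑ q', if φ q' = φ q0 then μ q' else 0 := by
    rw [← Finset.sum_filter]
    exact Finset.sum_pos (fun q _ => hμ q) ⟨q0, by simp⟩
  set M := (∑ q', if φ q' = φ q0 then μ q' else 0) with hM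
  set H := (∑ q', if φ q' = φ q0 then μ q' * h q' else 0) with hH
  have : ∀ q ∈ Finset.univ.filter (fun q => φ q = φ q0),
      μ q * (U (φ q) * (h q - (∑ q', if φ q' = φ q then μ q' * h q' else 0)
         / (∑ q', if φ q' = φ q then μ q' else 0))) =
      U (φ q0) * (μ q * h q) - U (φ q0) * (H / M) * μ q := by
    intro q hq
    rw [(Finset.mem_filter.1 hq).2, ← hM, ← hH]; ring
  rw [Finset.sum_congr rfl this, Finset.sum_sub_distrib, ← Finset.mul_sum, ← Finset.mul_sum,
    Finset.sum_filter, Finset.sum_filter, ← hM, ← hH]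
  field_simp
  ring

/-- Orthogonality of the empirical residual. -/
lemma aux_emp {I X : Type*} [Fintype I] [DecidableEq X] (c : I → X) (y E : I → ℝ) (U : X → ℝ)
    (hE : ∀ i, E i = (∑ j, if c j = c i then y j else 0)
      / ((Finset.univ.filter fun j => c j = c i).card : ℝ)) :
    ∑ i, U (c i) * (y i - E i) = 0 := by
  have h := aux_orth_s10 c (fun _ => (1 : ℝ)) y (fun _ => one_pos) U
  rw [← h]
  refine Finset.sum_congr rfl fun i _ => ?_
  rw [hE i]
  simp [Finset.sum_ite]

lemma aux_exp_s10 (V w z : ℝ) (hV : 0 < V) (hw : |w| ≤ V) (hz : |z| ≤ V) :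
    Real.exp (1 / (4 * V ^ 2) * w * (z - w)) ≤
      1 + (1 / (4 * V ^ 2) * w - 2 * (1 / (4 * V ^ 2)) ^ 2 * w ^ 3) * z
        - w ^ 2 / (8 * V ^ 2) := by
  have hw2 : w ^ 2 ≤ V ^ 2 := sq_le_sq' (abs_le.1 hw).1 (abs_le.1 hw).2
  have hz2 : z ^ 2 ≤ V ^ 2 := sq_le_sq' (abs_le.1 hz).1 (abs_le.1 hz).2
  have hx : |1 / (4 * V ^ 2) * w * (z - w)| ≤ 1 := by
    rw [abs_mul, abs_mul, abs_of_nonneg (by positivity : 0 ≤ 1 / (4 * V ^ 2))]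
    have h1 : |z - w| ≤ 2 * V := (abs_sub z w).trans (by linarith)
    calc 1 / (4 * V ^ 2) * |w| * |z - w| ≤ 1 / (4 * V ^ 2) * V * (2 * V) := by gcongr
      _ ≤ 1 := by
        have : 1 / (4 * V ^ 2) * V * (2 * V) = 1 / 2 := by field_simp; norm_num
        rw [this]; norm_num
  have h := (abs_le.1 (Real.abs_exp_sub_one_sub_id_le hx)).2
  have h3 : (1 / (4 * V ^ 2)) ^ 2 * w ^ 2 * (z ^ 2 + w ^ 2) ≤ w ^ 2 / (8 * V ^ 2) := by
    calc _ ≤ (1 / (4 * V ^ 2)) ^ 2 * w ^ 2 * (V ^ 2 + V ^ 2) := by gcongr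
      _ = _ := by field_simp; ring
  have h4 : 1 / (4 * V ^ 2) * w ^ 2 = 2 * (w ^ 2 / (8 * V ^ 2)) := by field_simp; ring
  nlinarith

/-- (Concentration of the empirical projected Bellman operator.)
With `n` i.i.d. tuples `(sᵢ,aᵢ,rᵢ,s'ᵢ)` where `(sᵢ,aᵢ) ∼ μ`, `rᵢ = R(sᵢ,aᵢ)` and
`s'ᵢ ∼ P(·|sᵢ,aᵢ)`, and `T̂_φ^μ f` the empirical cellwise average of
`rᵢ + γ V_f(s'ᵢ)` (arbitrary in `[0, V_max]` on empty cells), if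
`n ≥ 16 V_max² (|φ| log(16 V_max²/ε̃²) + log(2/δ)) / ε̃²`, then with probability at
least `1 − δ/2`, `‖T̂_φ^μ f − T_φ^μ f‖_{2,μ} ≤ ε̃`. -/
theorem stmt10 {S A X : Type*} [Fintype S] [Fintype A] [Nonempty S] [Nonempty A]
    [DecidableEq X]
    [MeasurableSpace S] [MeasurableSingletonClass S]
    [MeasurableSpace A] [MeasurableSingletonClass A]
    (P : S → A → S → ℝ) (R : S → A → ℝ) (Rmax γ Vmax : ℝ)
    (hP0 : ∀ s a s', 0 ≤ P s a s') (hP1 : ∀ s a, ∑ s', P s a s' = 1)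
    (hR : ∀ s a, 0 ≤ R s a ∧ R s a ≤ Rmax)
    (hγ0 : 0 ≤ γ) (hγ1 : γ < 1)
    (hVmax : Vmax = Rmax / (1 - γ))
    (μ : S × A → ℝ) (hμpos : ∀ q, 0 < μ q) (hμsum : ∑ q, μ q = 1)
    (φ : S × A → X)
    (f : S × A → ℝ) (hf : ∀ q, 0 ≤ f q ∧ f q ≤ Vmax)
    (δ εt : ℝ) (hδ : 0 < δ) (hδ1 : δ < 1) (hεt : 0 < εt) (hεtV : εt ≤ Vmax)
    -- `ρ` is the joint law of a single tuple `((s,a), s')`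
    (ρ : Measure ((S × A) × S)) [IsProbabilityMeasure ρ]
    (hρ : ∀ x : (S × A) × S, ρ {x} = ENNReal.ofReal (μ x.1 * P x.1.1 x.1.2 x.2))
    (n : ℕ)
    -- `Temp D` is the empirical projected Bellman image `T̂_φ^μ f` built from `D`
    (Temp : (Fin n → (S × A) × S) → (S × A) → ℝ)
    (hTemp : ∀ D q, (∃ i, φ (D i).1 = φ q) →
      Temp D q =
        (∑ i : Fin n, if φ (D i).1 = φ q
            then R (D i).1.1 (D i).1.2 + γ * Vof f (D i).2 else 0)
          / ((Finset.univ.filter fun i : Fin n => φ (D i).1 = φ q).card : ℝ))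
    (hTemp' : ∀ D q, (¬ ∃ i, φ (D i).1 = φ q) → 0 ≤ Temp D q ∧ Temp D q ≤ Vmax)
    -- sample-size requirement
    (hn : (n : ℝ) ≥ 16 * Vmax ^ 2 *
        ((Nat.card (Set.range φ) : ℝ) * Real.log (16 * Vmax ^ 2 / εt ^ 2)
          + Real.log (2 / δ)) / εt ^ 2) :
    (Measure.pi fun _ : Fin n => ρ)
      {D | Real.sqrt (∑ q : S × A, μ q * (Temp D q - projT P R γ μ φ f q) ^ 2) ≤ εt}
      ≥ ENNReal.ofReal (1 - δ / 2) := by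
  classical
  have hV : 0 < Vmax := hεt.trans_le hεtV
  have hRV : Rmax = (1 - γ) * Vmax := by
    rw [hVmax]; field_simp [(by linarith : (1 - γ) ≠ 0)]
  -- bounds on values
  have hVof : ∀ s, 0 ≤ Vof f s ∧ Vof f s ≤ Vmax := by
    intro s
    refine ⟨?_, Finset.sup'_le _ _ fun a _ => (hf (s, a)).2⟩
    obtain ⟨a⟩ := ‹Nonempty A›
    exact (hf (s, a)).1.trans (Finset.le_sup' (fun a => f (s, a)) (Finset.mem_univ a))
  have hY : ∀ x : (S × A) × S, 0 ≤ R x.1.1 x.1.2 + γ * Vof f x.2 ∧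
      R x.1.1 x.1.2 + γ * Vof f x.2 ≤ Vmax := by
    intro x
    have h1 := hR x.1.1 x.1.2
    have h2 := hVof x.2
    have h3 := mul_nonneg hγ0 h2.1
    have h4 := mul_le_mul_of_nonneg_left h2.2 hγ0
    constructor <;> nlinarith
  have hT : ∀ q, 0 ≤ bellmanT P R γ f q ∧ bellmanT P R γ f q ≤ Vmax := by
    intro q
    have e : bellmanT P R γ f q = ∑ s', P q.1 q.2 s' * (R q.1 q.2 + γ * Vof f s') := by
      simp only [mul_add, Finset.sum_add_distrib, ← Finset.sum_mul, hP1, bellmanT, Finset.mul_sum]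
      rw [one_mul]
      congr 1
      exact Finset.sum_congr rfl fun _ _ => by ring
    rw [e]
    constructor
    · exact Finset.sum_nonneg fun s' _ => mul_nonneg (hP0 _ _ _) (hY (q, s')).1
    · calc _ ≤ ∑ s', P q.1 q.2 s' * Vmax :=
            Finset.sum_le_sum fun s' _ => mul_le_mul_of_nonneg_left (hY (q, s')).2 (hP0 _ _ _)
        _ = Vmax := by rw [← Finset.sum_mul, hP1, one_mul]
  have hproj : ∀ q, 0 ≤ projT P R γ μ φ f q ∧ projT P R γ μ φ f q ≤ Vmax := by
    intro q
    have hpos : 0 < ∑ q', if φ q' = φ q then μ q' else 0 := by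
      rw [← Finset.sum_filter]
      exact Finset.sum_pos (fun q _ => hμpos q) ⟨q, by simp⟩
    unfold projT
    constructor
    · refine div_nonneg (Finset.sum_nonneg fun q' _ => ?_) hpos.le
      split_ifs
      · exact mul_nonneg (hμpos _).le (hT _).1
      · exact le_rfl
    · rw [div_le_iff₀ hpos, Finset.mul_sum]
      refine Finset.sum_le_sum fun q' _ => ?_
      split_ifs
      · rw [mul_comm]
        exact mul_le_mul_of_nonneg_right (hT _).2 (hμpos _).le
      · simp
  have hTb : ∀ D q, 0 ≤ Temp D q ∧ Temp D q ≤ Vmax := by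
    intro D q
    by_cases h : ∃ i, φ (D i).1 = φ q
    · rw [hTemp D q h]
      obtain ⟨i0, hi0⟩ := h
      have hpos : (0 : ℝ) < ((Finset.univ.filter fun i : Fin n => φ (D i).1 = φ q).card : ℝ) := by
        exact_mod_cast Finset.card_pos.2 ⟨i0, by simp [hi0]⟩
      rw [← Finset.sum_filter]
      constructor
      · exact div_nonneg (Finset.sum_nonneg fun i _ => (hY (D i)).1) hpos.le
      · rw [div_le_iff₀ hpos]
        refine (Finset.sum_le_sum fun i _ => (hY (D i)).2).trans ?_
        simp [mul_comm]
    · exact hTemp' D q h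
  -- the grid
  set J : ℤ := ⌊4 * Vmax / εt⌋ with hJ
  have hJ0 : 0 ≤ J := Int.floor_nonneg.2 (by positivity)
  have hJle : (J : ℝ) ≤ 4 * Vmax / εt := Int.floor_le _
  let W := Set.range φ → Finset.Icc (-J) J
  let U : W → X → ℝ := fun w x => if h : x ∈ Set.range φ then εt / 4 * ((w ⟨x, h⟩ : ℤ) : ℝ) else 0
  have hUb : ∀ w x, |U w x| ≤ Vmax := by
    intro w x
    simp only [U]
    split_ifs with h
    · have h1 := Finset.mem_Icc.1 (w ⟨x, h⟩).2
      have h2 : |((w ⟨x, h⟩ : ℤ) : ℝ)| ≤ J := by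
        rw [abs_le]; exact ⟨by exact_mod_cast h1.1, by exact_mod_cast h1.2⟩
      rw [abs_mul, abs_of_pos (by positivity : 0 < εt / 4)]
      calc _ ≤ εt / 4 * (4 * Vmax / εt) := by gcongr; exact h2.trans hJle
        _ = Vmax := by field_simp
    · simpa using hV.le
  let N : W → ℝ := fun w => ∑ q, μ q * (U w (φ q)) ^ 2
  let Z : (S × A) × S → ℝ := fun x => R x.1.1 x.1.2 + γ * Vof f x.2 - projT P R γ μ φ f x.1
  have hZb : ∀ x, |Z x| ≤ Vmax := by
    intro x
    rw [abs_le]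
    have h1 := hY x
    have h2 := hproj x.1
    simp only [Z]
    constructor <;> linarith
  let g : W → (S × A) × S → ℝ := fun w x =>
    1 / (4 * Vmax ^ 2) * U w (φ x.1) * (Z x - U w (φ x.1)) + N w / (8 * Vmax ^ 2)
  set L : ℝ := (Nat.card (Set.range φ) : ℝ) * Real.log (16 * Vmax ^ 2 / εt ^ 2)
          + Real.log (2 / δ) with hL
  have hratio : 1 ≤ Vmax / εt := (one_le_div hεt).2 hεtV
  have hratio2 : 16 * Vmax ^ 2 / εt ^ 2 = 16 * (Vmax / εt) ^ 2 := by rw [div_pow]; ring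
  have hLpos : 0 < L := by
    have h1 : 0 ≤ Real.log (16 * Vmax ^ 2 / εt ^ 2) := by
      rw [hratio2]; exact Real.log_nonneg (by nlinarith)
    have h2 : 0 < Real.log (2 / δ) := Real.log_pos (by rw [lt_div_iff₀ hδ]; linarith)
    positivity
  have hcard : (Fintype.card W : ℝ) * Real.exp (-L) ≤ δ / 2 := by
    have h1 : (Fintype.card W : ℝ) ≤ (16 * Vmax ^ 2 / εt ^ 2) ^ (Nat.card (Set.range φ)) := by
      have h2 : Fintype.card W = (2 * J + 1).toNat ^ (Nat.card (Set.range φ)) := by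
        simp only [W]
        rw [Fintype.card_fun, Fintype.card_coe, Int.card_Icc, Nat.card_eq_fintype_card]
        congr 2
        ring
      rw [h2]
      push_cast
      refine pow_le_pow_left₀ (by positivity) ?_ _
      have h3 : (((2 * J + 1).toNat : ℕ) : ℝ) = 2 * J + 1 := by
        have : (((2 * J + 1).toNat : ℤ)) = 2 * J + 1 := Int.toNat_of_nonneg (by lia)
        exact_mod_cast this
      rw [h3, hratio2]
      have h4 : (J : ℝ) ≤ 4 * (Vmax / εt) := by rw [← mul_div_assoc]; exact hJle
      nlinarith
    have hp : 0 < 16 * Vmax ^ 2 / εt ^ 2 := by positivity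
    have h5 : Real.exp L = (16 * Vmax ^ 2 / εt ^ 2) ^ (Nat.card (Set.range φ)) * (2 / δ) := by
      rw [hL, Real.exp_add, Real.exp_log (by positivity), Real.exp_nat_mul, Real.exp_log hp]
    rw [Real.exp_neg, ← div_eq_mul_inv, div_le_iff₀ (Real.exp_pos _), h5]
    have : δ / 2 * ((16 * Vmax ^ 2 / εt ^ 2) ^ (Nat.card (Set.range φ)) * (2 / δ))
        = (16 * Vmax ^ 2 / εt ^ 2) ^ (Nat.card (Set.range φ)) := by field_simp
    rw [this]; exact h1
  -- expectations
  have hreal : ∀ x, ρ.real {x} = μ x.1 * P x.1.1 x.1.2 x.2 := by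
    intro x
    rw [measureReal_def, hρ, ENNReal.toReal_ofReal (mul_nonneg (hμpos _).le (hP0 _ _ _))]
  have hexp : ∀ w, ∫ x, Real.exp (g w x) ∂ρ ≤ 1 := by
    intro w
    let B : X → ℝ := fun y => 1 / (4 * Vmax ^ 2) * U w y - 2 * (1 / (4 * Vmax ^ 2)) ^ 2 * (U w y) ^ 3
    have hpt : ∀ x, Real.exp (g w x) ≤ Real.exp (N w / (8 * Vmax ^ 2)) *
        (1 + B (φ x.1) * Z x - (U w (φ x.1)) ^ 2 / (8 * Vmax ^ 2)) := by
      intro x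
      simp only [g]
      rw [Real.exp_add, mul_comm]
      exact mul_le_mul_of_nonneg_left (aux_exp_s10 _ _ _ hV (hUb _ _) (hZb _)) (Real.exp_pos _).le
    have hsum : ∑ x : (S × A) × S, μ x.1 * P x.1.1 x.1.2 x.2 *
        (1 + B (φ x.1) * Z x - (U w (φ x.1)) ^ 2 / (8 * Vmax ^ 2)) = 1 - N w / (8 * Vmax ^ 2) := by
      rw [Fintype.sum_prod_type]
      have hq : ∀ q : S × A, ∑ s', μ q * P q.1 q.2 s' *
          (1 + B (φ q) * Z (q, s') - (U w (φ q)) ^ 2 / (8 * Vmax ^ 2)) =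
          μ q + μ q * (B (φ q) * (bellmanT P R γ f q - projT P R γ μ φ f q))
            - μ q * (U w (φ q)) ^ 2 / (8 * Vmax ^ 2) := by
        intro q
        have e1 : ∀ s', μ q * P q.1 q.2 s' *
          (1 + B (φ q) * Z (q, s') - (U w (φ q)) ^ 2 / (8 * Vmax ^ 2)) =
          P q.1 q.2 s' * (μ q * (1 + B (φ q) * (R q.1 q.2 - projT P R γ μ φ f q)
            - (U w (φ q)) ^ 2 / (8 * Vmax ^ 2)))
          + (μ q * B (φ q) * γ) * (P q.1 q.2 s' * Vof f s') := by
          intro s'; simp only [Z]; ring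
        rw [Finset.sum_congr rfl fun s' _ => e1 s', Finset.sum_add_distrib, ← Finset.sum_mul, hP1,
          ← Finset.mul_sum]
        simp only [bellmanT]
        ring
      refine (Finset.sum_congr rfl fun q _ => hq q).trans ?_
      rw [Finset.sum_sub_distrib, Finset.sum_add_distrib, hμsum, ← Finset.sum_div]
      have := aux_orth_s10 φ μ (bellmanT P R γ f) hμpos B
      unfold projT
      rw [this, add_zero]
    rw [integral_fintype Integrable.of_finite]
    calc ∑ x, ρ.real {x} • Real.exp (g w x)
        ≤ ∑ x : (S × A) × S, Real.exp (N w / (8 * Vmax ^ 2)) * (μ x.1 * P x.1.1 x.1.2 x.2 *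
        (1 + B (φ x.1) * Z x - (U w (φ x.1)) ^ 2 / (8 * Vmax ^ 2))) := by
          refine Finset.sum_le_sum fun x _ => ?_
          rw [hreal, smul_eq_mul]
          have := mul_le_mul_of_nonneg_left (hpt x)
            (mul_nonneg (hμpos x.1).le (hP0 x.1.1 x.1.2 x.2))
          linarith
      _ = Real.exp (N w / (8 * Vmax ^ 2)) * (1 - N w / (8 * Vmax ^ 2)) := by
          rw [← Finset.mul_sum, hsum]
      _ ≤ Real.exp (N w / (8 * Vmax ^ 2)) * Real.exp (-(N w / (8 * Vmax ^ 2))) := by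
          gcongr
          exact Real.one_sub_le_exp_neg _
      _ = 1 := by rw [← Real.exp_add]; simp
  refine ge_trans (measure_mono ?_) (aux_union ρ n g L (δ / 2) hexp hcard)
  -- deterministic part
  intro D hD
  rw [Set.mem_ofPred_eq] at hD ⊢
  set e : S × A → ℝ := fun q => Temp D q - projT P R γ μ φ f q with he
  have heb : ∀ q, |e q| ≤ Vmax := by
    intro q
    rw [abs_le]
    have h1 := hTb D q
    have h2 := hproj q
    simp only [e]
    constructor <;> linarith
  have hmax : ∀ x : Set.range φ, ∃ q, φ q = x ∧ ∀ q', φ q' = x → |e q'| ≤ |e q| := by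
    rintro ⟨x, q0, hq0⟩
    obtain ⟨q, hq, hm⟩ := Finset.exists_max_image (Finset.univ.filter fun q => φ q = x)
      (fun q => |e q|) ⟨q0, by simp [hq0]⟩
    exact ⟨q, (Finset.mem_filter.1 hq).2, fun q' hq' => hm q' (by simp [hq'])⟩
  choose c hc1 hc2 using hmax
  have htr : ∀ x : Set.range φ, ∃ j : Finset.Icc (-J) J,
      0 ≤ (εt / 4 * ((j : ℤ) : ℝ)) * (e (c x) - εt / 4 * ((j : ℤ) : ℝ)) ∧
        |e (c x) - εt / 4 * ((j : ℤ) : ℝ)| ≤ εt / 4 := by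
    intro x
    obtain ⟨j, h1, h2⟩ := aux_trunc Vmax εt (e (c x)) hεt (heb _)
    exact ⟨⟨j, h1⟩, h2⟩
  choose w hw1 hw2 using htr
  let ψ : S × A → Set.range φ := fun q => ⟨φ q, q, rfl⟩
  have hU : ∀ q, U w (φ q) = εt / 4 * ((w (ψ q) : ℤ) : ℝ) := by
    intro q
    simp only [U, ψ]
    rw [dif_pos ⟨q, rfl⟩]
  have hsq : ∀ q, (e q) ^ 2 ≤ 3 / 2 * (U w (φ q)) ^ 2 + 3 * (εt / 4) ^ 2 := by
    intro q
    have h1 : (e q) ^ 2 ≤ (e (c (ψ q))) ^ 2 := sq_le_sq.2 (hc2 (ψ q) q rfl)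
    have h2 := hw2 (ψ q)
    rw [← hU] at h2
    have h3 : (e (c (ψ q)) - U w (φ q)) ^ 2 ≤ (εt / 4) ^ 2 :=
      sq_le_sq' (abs_le.1 h2).1 (abs_le.1 h2).2
    nlinarith [sq_nonneg (U w (φ q) - 2 * (e (c (ψ q)) - U w (φ q)))]
  have hNsum : ∑ q, μ q * (e q) ^ 2 ≤ 3 / 2 * N w + 3 * (εt / 4) ^ 2 := by
    calc _ ≤ ∑ q, (3 / 2 * (μ q * (U w (φ q)) ^ 2) + μ q * (3 * (εt / 4) ^ 2)) := by
          refine Finset.sum_le_sum fun q _ => ?_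
          have := mul_le_mul_of_nonneg_left (hsq q) (hμpos q).le
          linarith
      _ = _ := by
          rw [Finset.sum_add_distrib, ← Finset.mul_sum, ← Finset.sum_mul, hμsum, one_mul]
  have hemp := aux_emp (fun i => φ (D i).1) (fun i => R (D i).1.1 (D i).1.2 + γ * Vof f (D i).2)
    (fun i => Temp D (D i).1) (U w) (fun i => hTemp D (D i).1 ⟨i, rfl⟩)
  have hconst : ∀ i, e (D i).1 = e (c (ψ (D i).1)) := by
    intro i
    have hphi : φ (c (ψ (D i).1)) = φ (D i).1 := hc1 (ψ (D i).1)
    simp only [e]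
    rw [hTemp D (D i).1 ⟨i, rfl⟩, hTemp D (c (ψ (D i).1)) ⟨i, hphi.symm⟩]
    unfold projT
    rw [hphi]
  have hnn : 0 ≤ ∑ i, U w (φ (D i).1) * (Z (D i) - U w (φ (D i).1)) := by
    have h1 : ∑ i, U w (φ (D i).1) * (Z (D i) - U w (φ (D i).1)) =
        ∑ i, U w (φ (D i).1) * (e (D i).1 - U w (φ (D i).1)) := by
      rw [← sub_eq_zero, ← Finset.sum_sub_distrib, ← hemp]
      refine Finset.sum_congr rfl fun i _ => ?_
      simp only [Z, e]; ring
    rw [h1]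
    refine Finset.sum_nonneg fun i _ => ?_
    rw [hconst, hU]
    exact hw1 _
  have hDw := hD w
  simp only [g] at hDw
  rw [Finset.sum_add_distrib] at hDw
  simp only [mul_assoc] at hDw
  rw [← Finset.mul_sum, Finset.sum_const, Finset.card_univ, Fintype.card_fin, nsmul_eq_mul] at hDw
  have hnN : n * (N w / (8 * Vmax ^ 2)) ≤ L := by
    have : 0 ≤ 1 / (4 * Vmax ^ 2) * ∑ i, U w (φ (D i).1) * (Z (D i) - U w (φ (D i).1)) :=
      mul_nonneg (by positivity) hnn
    linarith
  have hN0 : 0 ≤ N w := Finset.sum_nonneg fun q _ => mul_nonneg (hμpos q).le (sq_nonneg _)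
  have hNle : N w ≤ εt ^ 2 / 2 := by
    have h1 : 16 * Vmax ^ 2 * L / εt ^ 2 * (N w / (8 * Vmax ^ 2)) ≤ L :=
      (mul_le_mul_of_nonneg_right hn (by positivity)).trans hnN
    have h2 : 16 * Vmax ^ 2 * L / εt ^ 2 * (N w / (8 * Vmax ^ 2)) = L * (2 * N w / εt ^ 2) := by
      field_simp; ring
    rw [h2] at h1
    have h3 : 2 * N w / εt ^ 2 ≤ 1 := by
      by_contra h
      push Not at h
      nlinarith
    rw [div_le_one (by positivity)] at h3
    linarith
  rw [Real.sqrt_le_left hεt.le]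
  have : 0 ≤ εt ^ 2 := sq_nonneg _
  refine hNsum.trans ?_
  linarith
end

section
/- Fix f₀ : S × A → [0, V_max], δ ∈ (0,1), and 0 < ε₁ ≤ V_max. Let D = ((s₁,a₁), …, (sₙ,aₙ)) be n i.i.d. draws from μ, and for g : S × A → ℝ define the empirical norm ‖f₀ − g‖_{2,D} := ((1/n) \sum_{i=1}^n (f₀(sᵢ,aᵢ) − g(sᵢ,aᵢ))²)^{1/2}. Let G_φ^b denote the set of functions g : S × A → [0, V_max] that are piecewise constant with respect to φ, and let |φ| denote the number of nonempty aggregation cells. If n ≥ 50 V_max² |φ| ln(80 V_max/(ε₁ δ)) / ε₁², then with probability at least 1 − δ/2, for every g ∈ G_φ^b simultaneously, |‖f₀ − g‖_{2,D} − ‖f₀ − g‖_{2,μ}| ≤ ε₁. -/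
open MeasureTheory

lemma aux_tri {ι : Type*} [Fintype ι] (w a b : ι → ℝ) (hw : ∀ i, 0 ≤ w i) (hs : ∑ i, w i = 1)
    (η : ℝ) (hη : 0 ≤ η) (hab : ∀ i, |a i - b i| ≤ η) :
    Real.sqrt (∑ i, w i * a i ^ 2) ≤ Real.sqrt (∑ i, w i * b i ^ 2) + η := by
  set B := ∑ i, w i * b i ^ 2 with hB
  set c := ∑ i, w i * |b i| with hc
  have hB0 : 0 ≤ B := Finset.sum_nonneg fun i _ => mul_nonneg (hw i) (sq_nonneg _)
  have hcB : c ^ 2 ≤ B := by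
    have h0 : 0 ≤ ∑ i, w i * (|b i| - c) ^ 2 :=
      Finset.sum_nonneg fun i _ => mul_nonneg (hw i) (sq_nonneg _)
    have h1 : ∑ i, w i * (|b i| - c) ^ 2 = B - 2 * c * c + c ^ 2 * 1 := by
      have h2 : ∀ i, w i * (|b i| - c) ^ 2
          = w i * b i ^ 2 - 2 * c * (w i * |b i|) + c ^ 2 * w i := fun i => by
        have := sq_abs (b i)
        linear_combination (w i) * this
      simp only [h2]
      rw [Finset.sum_add_distrib, Finset.sum_sub_distrib, ← Finset.mul_sum, ← Finset.mul_sum, hs]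
    nlinarith
  have hcs : c ≤ Real.sqrt B := Real.le_sqrt_of_sq_le hcB
  have hA : ∑ i, w i * a i ^ 2 ≤ B + 2 * η * c + η ^ 2 * 1 := by
    rw [← hs, hB, hc, Finset.mul_sum, Finset.mul_sum, ← Finset.sum_add_distrib,
      ← Finset.sum_add_distrib]
    refine Finset.sum_le_sum fun i _ => ?_
    have h1 : |a i| ≤ |b i| + η := by
      have := abs_sub_abs_le_abs_sub (a i) (b i)
      linarith [hab i]
    have h2 : a i ^ 2 ≤ (|b i| + η) ^ 2 := by
      rw [← sq_abs (a i)]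
      exact pow_le_pow_left₀ (abs_nonneg _) h1 2
    have := sq_abs (b i)
    have h3 := mul_le_mul_of_nonneg_left h2 (hw i)
    have h4 : w i * (|b i| + η) ^ 2 = w i * b i ^ 2 + 2 * η * (w i * |b i|) + η ^ 2 * w i := by
      linear_combination (w i) * this
    linarith
  have hsq := Real.sq_sqrt hB0
  apply Real.sqrt_le_iff.mpr
  refine ⟨by positivity, ?_⟩
  nlinarith [mul_le_mul_of_nonneg_left hcs hη]

lemma aux_tri_abs {ι : Type*} [Fintype ι] (w a b : ι → ℝ) (hw : ∀ i, 0 ≤ w i)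
    (hs : ∑ i, w i = 1)
    (η : ℝ) (hη : 0 ≤ η) (hab : ∀ i, |a i - b i| ≤ η) :
    |Real.sqrt (∑ i, w i * a i ^ 2) - Real.sqrt (∑ i, w i * b i ^ 2)| ≤ η := by
  rw [abs_le]
  have h1 := aux_tri w a b hw hs η hη hab
  have h2 := aux_tri w b a hw hs η hη (fun i => by rw [abs_sub_comm]; exact hab i)
  constructor <;> linarith

lemma aux_mgf_s11 {Ω : Type*} [Finite Ω] [MeasurableSpace Ω] [MeasurableSingletonClass Ω]
    (ρ : Measure Ω) [IsProbabilityMeasure ρ] (Y : Ω → ℝ) (hY : ∀ q, 0 ≤ Y q ∧ Y q ≤ 1)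
    (l : ℝ) (hl : |l| ≤ 1) (n : ℕ) :
    ProbabilityTheory.mgf (fun D : Fin n → Ω => ∑ i, Y (D i)) (Measure.pi fun _ : Fin n => ρ) l
      ≤ Real.exp (n * ((∫ q, Y q ∂ρ) * (l + l ^ 2))) := by
  have h1 : ProbabilityTheory.mgf (fun D : Fin n → Ω => ∑ i, Y (D i))
      (Measure.pi fun _ : Fin n => ρ) l = (∫ q, Real.exp (l * Y q) ∂ρ) ^ n := by
    unfold ProbabilityTheory.mgf
    have := integral_fintype_prod_eq_pow (ι := Fin n) (μ := ρ) (fun q => Real.exp (l * Y q))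
    rw [Fintype.card_fin] at this
    rw [← this]
    congr 1
    ext D
    beta_reduce
    rw [Finset.mul_sum, Real.exp_sum]
  rw [h1, Real.exp_nat_mul]
  refine pow_le_pow_left₀ (integral_nonneg fun q => (Real.exp_pos _).le) ?_ n
  calc ∫ q, Real.exp (l * Y q) ∂ρ ≤ ∫ q, (1 + Y q * (l + l ^ 2)) ∂ρ := by
        refine integral_mono (Integrable.of_finite) (Integrable.of_finite) fun q => ?_
        have hx : |l * Y q| ≤ 1 := by
          rw [abs_mul, abs_of_nonneg (hY q).1]
          exact mul_le_one₀ hl (hY q).1 (hY q).2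
        have h2 := (abs_le.mp (Real.abs_exp_sub_one_sub_id_le hx)).2
        have h3 : Y q ^ 2 ≤ Y q := by nlinarith [hY q]
        have := mul_le_mul_of_nonneg_left h3 (sq_nonneg l)
        simp only
        nlinarith
    _ = 1 + (∫ q, Y q ∂ρ) * (l + l ^ 2) := by
        rw [integral_add Integrable.of_finite Integrable.of_finite, integral_mul_const]
        simp
    _ ≤ _ := by
        have := Real.add_one_le_exp ((∫ q, Y q ∂ρ) * (l + l ^ 2))
        linarith

lemma aux_conc {Ω : Type*} [Finite Ω] [MeasurableSpace Ω] [MeasurableSingletonClass Ω]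
    (ρ : Measure Ω) [IsProbabilityMeasure ρ] (Y : Ω → ℝ) (hY : ∀ q, 0 ≤ Y q ∧ Y q ≤ 1)
    (t : ℝ) (ht : 0 < t) (n : ℕ) (hn : 0 < n) :
    (Measure.pi fun _ : Fin n => ρ).real
      {D | t < |Real.sqrt ((1 / (n : ℝ)) * ∑ i, Y (D i)) - Real.sqrt (∫ q, Y q ∂ρ)|}
      ≤ 2 * Real.exp (-(n * t ^ 2 / 4)) := by
  set m := ∫ q, Y q ∂ρ with hm
  have hm0 : 0 ≤ m := integral_nonneg fun q => (hY q).1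
  set s := Real.sqrt m with hs
  have hs0 : 0 ≤ s := Real.sqrt_nonneg _
  have hss : s ^ 2 = m := Real.sq_sqrt hm0
  have hnR : (0 : ℝ) < n := by exact_mod_cast hn
  set P := Measure.pi fun _ : Fin n => ρ with hP
  set X : (Fin n → Ω) → ℝ := fun D => ∑ i, Y (D i) with hX
  have hX0 : ∀ D, 0 ≤ X D := fun D => Finset.sum_nonneg fun i _ => (hY _).1
  -- upper tail
  have hU : P.real {D | n * (s + t) ^ 2 ≤ X D} ≤ Real.exp (-(n * t ^ 2 / 4)) := by
    set l := t / (s + t) with hl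
    have hst : 0 < s + t := by positivity
    have hl0 : 0 ≤ l := by positivity
    have hl1 : l ≤ 1 := by rw [hl, div_le_one hst]; linarith
    have hlst : l * (s + t) = t := by rw [hl]; field_simp
    refine (ProbabilityTheory.measure_ge_le_exp_mul_mgf (μ := P) (X := X) (t := l)
      (n * (s + t) ^ 2) hl0 Integrable.of_finite).trans ?_
    refine (mul_le_mul_of_nonneg_left (aux_mgf_s11 ρ Y hY l (by rw [abs_of_nonneg hl0]; exact hl1) n)
      (Real.exp_pos _).le).trans ?_
    rw [← Real.exp_add, Real.exp_le_exp, ← hm, ← hss]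
    have key : -l * (s + t) ^ 2 + s ^ 2 * (l + l ^ 2) ≤ -(t ^ 2 / 4) := by
      have e1 : l * s ≤ t := by nlinarith
      have e2 : l * (s + t) ^ 2 = t * (s + t) := by linear_combination (s + t) * hlst
      have e3 : l * s = t - l * t := by linarith
      have e4 : 0 ≤ l * s := by positivity
      have e5 : s ^ 2 * (l + l ^ 2) = (l * s) * s + (l * s) ^ 2 := by ring
      have e6 : (l * s) * s + (l*s) * t = t * s := by linear_combination s * hlst
      have e7 : -l * (s + t) ^ 2 = - (t * (s + t)) := by linarith
      rw [e5, e7]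
      nlinarith
    have := mul_le_mul_of_nonneg_left key hnR.le
    linarith
  -- lower tail
  have hL : P.real {D | t < s ∧ X D ≤ n * (s - t) ^ 2} ≤ Real.exp (-(n * t ^ 2 / 4)) := by
    by_cases hts : t < s
    · have hsp : 0 < s := ht.trans hts
      simp only [hts, true_and]
      set l := t / (2 * s) with hl
      have hl0 : 0 ≤ l := by positivity
      have hl1 : l ≤ 1 := by rw [hl, div_le_one (by positivity)]; linarith
      have hls : l * s = t / 2 := by rw [hl]; field_simp
      refine (ProbabilityTheory.measure_le_le_exp_mul_mgf (μ := P) (X := X) (t := -l)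
        (n * (s - t) ^ 2) (by linarith) Integrable.of_finite).trans ?_
      refine (mul_le_mul_of_nonneg_left (aux_mgf_s11 ρ Y hY (-l)
        (by rw [abs_neg, abs_of_nonneg hl0]; exact hl1) n) (Real.exp_pos _).le).trans ?_
      rw [← Real.exp_add, Real.exp_le_exp, ← hm, ← hss]
      have key : l * (s - t) ^ 2 + s ^ 2 * (-l + l ^ 2) ≤ -(t ^ 2 / 4) := by
        have e1 : l * (s - t) ^ 2 + s ^ 2 * (-l + l ^ 2)
          = -2 * t * (l * s) + l * t ^ 2 + (l * s) ^ 2 := by ring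
        have e2 : l * t ≤ t / 2 := by
          rw [← hls]; exact mul_le_mul_of_nonneg_left hts.le hl0
        rw [e1, hls]
        nlinarith
      have := mul_le_mul_of_nonneg_left key hnR.le
      linarith
    · simp only [hts, false_and, Set.ofPred_false, measureReal_empty]
      positivity
  have hsub : {D | t < |Real.sqrt ((1 / (n : ℝ)) * X D) - s|} ⊆
      {D | n * (s + t) ^ 2 ≤ X D} ∪ {D | t < s ∧ X D ≤ n * (s - t) ^ 2} := by
    intro D hD
    simp only [Set.mem_ofPred_eq, Set.mem_union] at hD ⊢
    set r := Real.sqrt ((1 / (n : ℝ)) * X D) with hr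
    have hr0 : 0 ≤ r := Real.sqrt_nonneg _
    have hrr : r ^ 2 = (1 / (n : ℝ)) * X D :=
      Real.sq_sqrt (mul_nonneg (by positivity) (hX0 D))
    have hXr : X D = n * r ^ 2 := by rw [hrr]; field_simp
    rw [hXr]
    rcases lt_abs.mp hD with h | h
    · left
      exact mul_le_mul_of_nonneg_left (pow_le_pow_left₀ (by positivity) (by linarith) 2) hnR.le
    · right
      exact ⟨by linarith,
        mul_le_mul_of_nonneg_left (pow_le_pow_left₀ hr0 (by linarith) 2) hnR.le⟩
  calc _ ≤ P.real ({D | n * (s + t) ^ 2 ≤ X D} ∪ {D | t < s ∧ X D ≤ n * (s - t) ^ 2}) :=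
        measureReal_mono hsub
    _ ≤ _ := measureReal_union_le _ _
    _ ≤ _ := by linarith

lemma aux_conc_scaled {Ω : Type*} [Finite Ω] [MeasurableSpace Ω] [MeasurableSingletonClass Ω]
    (ρ : Measure Ω) [IsProbabilityMeasure ρ] (V : ℝ) (hV : 0 < V) (h : Ω → ℝ)
    (hh : ∀ q, |h q| ≤ V)
    (t : ℝ) (ht : 0 < t) (n : ℕ) (hn : 0 < n) :
    (Measure.pi fun _ : Fin n => ρ).real
      {D | t < |Real.sqrt ((1 / (n : ℝ)) * ∑ i, h (D i) ^ 2) - Real.sqrt (∫ q, h q ^ 2 ∂ρ)|}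
      ≤ 2 * Real.exp (-(n * (t / V) ^ 2 / 4)) := by
  have hY : ∀ q, 0 ≤ h q ^ 2 / V ^ 2 ∧ h q ^ 2 / V ^ 2 ≤ 1 := fun q => by
    refine ⟨by positivity, ?_⟩
    rw [div_le_one (by positivity), ← sq_abs (h q)]
    exact pow_le_pow_left₀ (abs_nonneg _) (hh q) 2
  have key := aux_conc ρ (fun q => h q ^ 2 / V ^ 2) hY (t / V) (by positivity) n hn
  convert key using 3
  ext D
  rw [integral_div, ← Finset.sum_div, mul_div_assoc', Real.sqrt_div' _ (by positivity),
    Real.sqrt_div' _ (by positivity), Real.sqrt_sq hV.le, ← sub_div, abs_div, abs_of_pos hV,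
    div_lt_div_iff_of_pos_right hV]

lemma aux_num (V ε δ : ℝ) (hV : 0 < V) (hε : 0 < ε) (hεV : ε ≤ V) (hδ : 0 < δ) (hδ1 : δ < 1)
    (K n N : ℕ) (hK : 0 < K) (hN : (N : ℝ) ≤ 6 * V / ε)
    (hn : (n : ℝ) ≥ 50 * V ^ 2 * K * Real.log (80 * V / (ε * δ)) / ε ^ 2) :
    (N : ℝ) ^ K * (2 * Real.exp (-(n * (ε / 2 / V) ^ 2 / 4))) ≤ δ / 2 := by
  set L := Real.log (80 * V / (ε * δ)) with hL
  set y := ε * δ / (80 * V) with hy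
  have hy0 : 0 < y := by positivity
  have hLy : Real.exp (-L) = y := by
    rw [Real.exp_neg, hL, Real.exp_log (by positivity), hy, inv_div]
  have hεδ : ε * δ ≤ V := by nlinarith
  have hy1 : y ≤ 1 := by rw [hy, div_le_one (by positivity)]; linarith
  have hL0 : 0 ≤ L := Real.log_nonneg (by
    rw [le_div_iff₀ (by positivity)]; linarith)
  have h1 : (3 : ℝ) * K * L ≤ n * (ε / 2 / V) ^ 2 / 4 := by
    have h2 : 50 * V ^ 2 * K * L / ε ^ 2 * (ε ^ 2 / (16 * V ^ 2)) ≤ n * (ε ^ 2 / (16 * V ^ 2)) :=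
      mul_le_mul_of_nonneg_right hn (by positivity)
    have h3 : 50 * V ^ 2 * K * L / ε ^ 2 * (ε ^ 2 / (16 * V ^ 2)) = 50 / 16 * (K * L) := by
      field_simp
    have h4 : n * (ε / 2 / V) ^ 2 / 4 = n * (ε ^ 2 / (16 * V ^ 2)) := by
      ring_nf
    rw [h4]
    have : 0 ≤ K * L := by positivity
    linarith
  have h5 : Real.exp (-(n * (ε / 2 / V) ^ 2 / 4)) ≤ (y ^ 3) ^ K := by
    rw [← hLy, ← Real.exp_nat_mul, ← Real.exp_nat_mul, Real.exp_le_exp]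
    push_cast
    linarith
  have h6 : (N : ℝ) * y ^ 3 ≤ 6 * δ / 80 := by
    calc (N : ℝ) * y ^ 3 ≤ 6 * V / ε * y := by
          refine mul_le_mul hN ?_ (by positivity) (by positivity)
          exact pow_le_of_le_one hy0.le hy1 (by norm_num)
      _ = _ := by rw [hy]; field_simp
  calc (N : ℝ) ^ K * (2 * Real.exp (-(n * (ε / 2 / V) ^ 2 / 4)))
      ≤ (N : ℝ) ^ K * (2 * (y ^ 3) ^ K) := by gcongr
    _ = 2 * (N * y ^ 3) ^ K := by rw [mul_pow]; ring
    _ ≤ 2 * (N * y ^ 3) := by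
        have : (N * y ^ 3) ^ K ≤ N * y ^ 3 :=
          pow_le_of_le_one (by positivity) (by linarith) hK.ne'
        linarith
    _ ≤ δ / 2 := by linarith

/-- (Uniform concentration of empirical distances.)  With `n`
i.i.d. draws from `μ` and `n ≥ 50 V_max² |φ| ln(80 V_max/(ε₁ δ)) / ε₁²`, with
probability at least `1 − δ/2`, simultaneously for every `g : S × A → [0, V_max]`
piecewise constant with respect to `φ`,
`|‖f₀ − g‖_{2,D} − ‖f₀ − g‖_{2,μ}| ≤ ε₁`. -/
theorem stmt11 {S A X : Type*} [Fintype S] [Fintype A] [Nonempty S] [Nonempty A]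
    [MeasurableSpace S] [MeasurableSingletonClass S]
    [MeasurableSpace A] [MeasurableSingletonClass A]
    (Vmax : ℝ) (hVmax : 0 < Vmax)
    (μ : S × A → ℝ) (hμpos : ∀ q, 0 < μ q) (hμsum : ∑ q, μ q = 1)
    (φ : S × A → X)
    (f₀ : S × A → ℝ) (hf₀ : ∀ q, 0 ≤ f₀ q ∧ f₀ q ≤ Vmax)
    (δ ε₁ : ℝ) (hδ : 0 < δ) (hδ1 : δ < 1) (hε₁ : 0 < ε₁) (hε₁V : ε₁ ≤ Vmax)
    -- `ρ` is the law of a single draw `(s,a) ∼ μ`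
    (ρ : Measure (S × A)) [IsProbabilityMeasure ρ]
    (hρ : ∀ q : S × A, ρ {q} = ENNReal.ofReal (μ q))
    (n : ℕ)
    -- sample-size requirement
    (hn : (n : ℝ) ≥ 50 * Vmax ^ 2 * (Nat.card (Set.range φ) : ℝ) *
        Real.log (80 * Vmax / (ε₁ * δ)) / ε₁ ^ 2) :
    (Measure.pi fun _ : Fin n => ρ)
      {D : Fin n → S × A |
        ∀ g : S × A → ℝ, (∀ q, 0 ≤ g q ∧ g q ≤ Vmax) → PiecewiseConst φ g →
          |Real.sqrt ((1 / (n : ℝ)) * ∑ i : Fin n, (f₀ (D i) - g (D i)) ^ 2)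
            - Real.sqrt (∑ q : S × A, μ q * (f₀ q - g q) ^ 2)| ≤ ε₁}
      ≥ ENNReal.ofReal (1 - δ / 2) := by
  classical
  set K := Nat.card (Set.range φ) with hK
  have hKpos : 0 < K := by
    rw [hK]; exact Nat.card_pos
  have hKR : (1 : ℝ) ≤ K := by exact_mod_cast hKpos
  have hLpos : 0 < Real.log (80 * Vmax / (ε₁ * δ)) := by
    apply Real.log_pos
    rw [lt_div_iff₀ (by positivity)]
    nlinarith
  have hnR : (0 : ℝ) < n := lt_of_lt_of_le (by positivity) hn
  have hn0 : 0 < n := by exact_mod_cast hnR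
  set M := ⌈4 * Vmax / ε₁⌉₊ with hM
  have hMl : 4 * Vmax / ε₁ ≤ M := Nat.le_ceil _
  have hMpos : (0 : ℝ) < M := lt_of_lt_of_le (by positivity) hMl
  have hMu : ((M + 1 : ℕ) : ℝ) ≤ 6 * Vmax / ε₁ := by
    have h1 : (M : ℝ) < 4 * Vmax / ε₁ + 1 := Nat.ceil_lt_add_one (by positivity)
    have h2 : 1 ≤ Vmax / ε₁ := (one_le_div hε₁).mpr hε₁V
    have h3 : 6 * Vmax / ε₁ = 4 * Vmax / ε₁ + Vmax / ε₁ + Vmax / ε₁ := by ring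
    push_cast
    linarith
  have hη : Vmax / M ≤ ε₁ / 4 := by
    rw [div_le_iff₀ hε₁] at hMl
    rw [div_le_iff₀ hMpos]
    linarith
  haveI : Fintype (Set.range φ) := Fintype.ofFinite _
  let G : (Set.range φ → Fin (M + 1)) → S × A → ℝ :=
    fun k q => ((k ⟨φ q, q, rfl⟩ : ℕ) : ℝ) * (Vmax / M)
  have hG : ∀ k q, 0 ≤ G k q ∧ G k q ≤ Vmax := fun k q => by
    refine ⟨by positivity, ?_⟩
    have h1 : ((k ⟨φ q, q, rfl⟩ : ℕ) : ℝ) ≤ M := by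
      exact_mod_cast Nat.lt_succ_iff.mp (k ⟨φ q, q, rfl⟩).2
    calc G k q ≤ M * (Vmax / M) := mul_le_mul_of_nonneg_right h1 (by positivity)
      _ = Vmax := by field_simp
  have hint : ∀ h : S × A → ℝ, ∫ q, h q ∂ρ = ∑ q, μ q * h q := fun h => by
    rw [integral_fintype Integrable.of_finite]
    refine Finset.sum_congr rfl fun q _ => ?_
    rw [measureReal_def, hρ, ENNReal.toReal_ofReal (hμpos q).le, smul_eq_mul]
  set P := Measure.pi fun _ : Fin n => ρ with hP
  let bad : (Set.range φ → Fin (M + 1)) → Set (Fin n → S × A) := fun k =>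
    {D | ε₁ / 2 < |Real.sqrt ((1 / (n : ℝ)) * ∑ i, (f₀ (D i) - G k (D i)) ^ 2)
      - Real.sqrt (∫ q, (f₀ q - G k q) ^ 2 ∂ρ)|}
  have hbad : ∀ k, P.real (bad k) ≤ 2 * Real.exp (-(n * (ε₁ / 2 / Vmax) ^ 2 / 4)) := fun k =>
    aux_conc_scaled ρ Vmax hVmax (fun q => f₀ q - G k q)
      (fun q => by
        rw [abs_le]
        constructor <;> linarith [hf₀ q, hG k q, (hf₀ q).1, (hf₀ q).2, (hG k q).1, (hG k q).2])
      (ε₁ / 2) (by positivity) n hn0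
  have hunion : P.real (⋃ k, bad k) ≤ δ / 2 := by
    calc P.real (⋃ k, bad k) ≤ ∑ k, P.real (bad k) := measureReal_iUnion_fintype_le _
      _ ≤ ∑ _k : (Set.range φ → Fin (M + 1)),
          2 * Real.exp (-(n * (ε₁ / 2 / Vmax) ^ 2 / 4)) := Finset.sum_le_sum fun k _ => hbad k
      _ = ((M + 1 : ℕ) : ℝ) ^ K * (2 * Real.exp (-(n * (ε₁ / 2 / Vmax) ^ 2 / 4))) := by
          rw [Finset.sum_const, Finset.card_univ, Fintype.card_fun, Fintype.card_fin, nsmul_eq_mul,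
            hK, Nat.card_eq_fintype_card]
          push_cast
          rfl
      _ ≤ δ / 2 := aux_num Vmax ε₁ δ hVmax hε₁ hε₁V hδ hδ1 K n (M + 1) hKpos hMu hn
  have hmeas : MeasurableSet (⋃ k, bad k) := (Set.toFinite _).measurableSet
  have hgood : 1 - δ / 2 ≤ P.real (⋃ k, bad k)ᶜ := by
    rw [probReal_compl_eq_one_sub hmeas]
    linarith
  have hsub : (⋃ k, bad k)ᶜ ⊆ {D : Fin n → S × A |
        ∀ g : S × A → ℝ, (∀ q, 0 ≤ g q ∧ g q ≤ Vmax) → PiecewiseConst φ g →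
          |Real.sqrt ((1 / (n : ℝ)) * ∑ i : Fin n, (f₀ (D i) - g (D i)) ^ 2)
            - Real.sqrt (∑ q : S × A, μ q * (f₀ q - g q) ^ 2)| ≤ ε₁} := by
    intro D hD g hg hpc
    let k : Set.range φ → Fin (M + 1) := fun x =>
      ⟨⌊g x.2.choose / (Vmax / M)⌋₊, by
        rw [Nat.lt_succ_iff]
        apply Nat.floor_le_of_le
        rw [div_le_iff₀ (by positivity)]
        calc g x.2.choose ≤ Vmax := (hg _).2
          _ = M * (Vmax / M) := by field_simp⟩
    have hclose : ∀ q, |(f₀ q - g q) - (f₀ q - G k q)| ≤ ε₁ / 4 := fun q => by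
      have hx : g (Set.mem_range_self (f := φ) q).choose = g q :=
        hpc _ _ (Set.mem_range_self (f := φ) q).choose_spec
      have hGq : G k q = (⌊g q / (Vmax / M)⌋₊ : ℝ) * (Vmax / M) := by
        rw [← hx]
      have hc : 0 < Vmax / M := by positivity
      have h1 : (⌊g q / (Vmax / M)⌋₊ : ℝ) ≤ g q / (Vmax / M) :=
        Nat.floor_le (div_nonneg (hg q).1 hc.le)
      have h2 : g q / (Vmax / M) < (⌊g q / (Vmax / M)⌋₊ : ℝ) + 1 := Nat.lt_floor_add_one _
      rw [le_div_iff₀ hc] at h1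
      rw [div_lt_iff₀ hc] at h2
      rw [hGq, abs_le]
      constructor <;> linarith
    have hk : D ∉ bad k := fun h => hD (Set.mem_iUnion.mpr ⟨k, h⟩)
    simp only [bad, Set.mem_ofPred_eq, not_lt] at hk
    rw [hint] at hk
    have e1 := aux_tri_abs (fun _ : Fin n => 1 / (n : ℝ)) (fun i => f₀ (D i) - g (D i))
      (fun i => f₀ (D i) - G k (D i)) (fun _ => by positivity)
      (by simp; field_simp) (ε₁ / 4) (by positivity) (fun i => hclose (D i))
    have e2 := aux_tri_abs μ (fun q => f₀ q - g q)
      (fun q => f₀ q - G k q) (fun q => (hμpos q).le) hμsum (ε₁ / 4) (by positivity) hclose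
    simp only [← Finset.mul_sum] at e1
    rw [abs_le] at e1 e2 hk ⊢
    constructor <;> linarith [e1.1, e1.2, e2.1, e2.2, hk.1, hk.2]
  calc ENNReal.ofReal (1 - δ / 2) ≤ ENNReal.ofReal (P.real (⋃ k, bad k)ᶜ) :=
        ENNReal.ofReal_le_ofReal hgood
    _ = P (⋃ k, bad k)ᶜ := by rw [ofReal_measureReal]
    _ ≤ _ := measure_mono hsub
end

section
/- Assume the concentrability Assumption holds with constants C_S and C_A, and set C := C_S · C_A. Let φ be any aggregation, let ε_φ := min_{g ∈ G_φ} ‖g − Q⋆‖_∞, and let f₀ : S × A → [0, V_max]. Then for every probability distribution ν on S × A satisfying ν(s,a) ≤ C μ(s,a) for all (s,a), ‖Q⋆ − f₀‖_{2,ν} ≤ (2 ε_φ + √C · ‖f₀ − T_φ^μ f₀‖_{2,μ}) / (1 − γ). -/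
/-- `‖f‖_{2,ν} := (∑_{s,a} ν(s,a) f(s,a)²)^{1/2}`. -/
noncomputable def l2Norm {S A : Type*} [Fintype S] [Fintype A]
    (ν f : S × A → ℝ) : ℝ :=
  Real.sqrt (∑ q : S × A, ν q * (f q) ^ 2)

theorem l2Norm_eq_norm {S A : Type*} [Fintype S] [Fintype A]
    (ν f : S × A → ℝ) (hν : ∀ q, 0 ≤ ν q) :
    l2Norm ν f = ‖(WithLp.toLp 2 (fun q => Real.sqrt (ν q) * f q) : EuclideanSpace ℝ (S × A))‖ := by
  rw [EuclideanSpace.norm_eq]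
  unfold l2Norm
  congr 1
  refine Finset.sum_congr rfl fun q _ => ?_
  simp only [Real.norm_eq_abs, sq_abs, mul_pow]
  rw [Real.sq_sqrt (hν q)]

theorem l2Norm_add_le {S A : Type*} [Fintype S] [Fintype A]
    (ν f g : S × A → ℝ) (hν : ∀ q, 0 ≤ ν q) :
    l2Norm ν (fun q => f q + g q) ≤ l2Norm ν f + l2Norm ν g := by
  rw [l2Norm_eq_norm ν _ hν, l2Norm_eq_norm ν f hν, l2Norm_eq_norm ν g hν]
  refine le_trans (le_of_eq ?_) (norm_add_le _ _)
  congr 1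
  ext q
  simp [mul_add]

theorem l2Norm_le_const {S A : Type*} [Fintype S] [Fintype A]
    (ν f : S × A → ℝ) (hν : ∀ q, 0 ≤ ν q) (hν1 : ∑ q, ν q = 1) (B : ℝ) (hB : 0 ≤ B)
    (hf : ∀ q, |f q| ≤ B) : l2Norm ν f ≤ B := by
  unfold l2Norm
  apply Real.sqrt_le_iff.2 ⟨hB, ?_⟩
  calc ∑ q, ν q * f q ^ 2 ≤ ∑ q, ν q * B ^ 2 := by
        refine Finset.sum_le_sum fun q _ => mul_le_mul_of_nonneg_left ?_ (hν q)
        exact sq_le_sq' (neg_le_of_abs_le (hf q)) (le_of_abs_le (hf q))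
    _ = B ^ 2 := by rw [← Finset.sum_mul, hν1, one_mul]

theorem kernel_jensen {α β : Type*} [Fintype α] [Fintype β]
    (ν : α → ℝ) (hν : ∀ q, 0 ≤ ν q) (K : α → β → ℝ) (hK : ∀ q b, 0 ≤ K q b)
    (hK1 : ∀ q, ∑ b, K q b = 1) (h : β → ℝ) :
    ∑ q, ν q * (∑ b, K q b * h b) ^ 2 ≤ ∑ b, (∑ q, ν q * K q b) * h b ^ 2 := by
  have h1 : ∀ q, (∑ b, K q b * h b) ^ 2 ≤ ∑ b, K q b * h b ^ 2 := by
    intro q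
    have := Finset.sum_sq_le_sum_mul_sum_of_sq_le_mul Finset.univ
      (r := fun b => K q b * h b) (f := fun b => K q b) (g := fun b => K q b * h b ^ 2)
      (fun b _ => hK q b) (fun b _ => mul_nonneg (hK q b) (sq_nonneg _))
      (fun b _ => le_of_eq (by ring))
    rwa [hK1, one_mul] at this
  calc _ ≤ ∑ q, ν q * ∑ b, K q b * h b ^ 2 :=
        Finset.sum_le_sum fun q _ => mul_le_mul_of_nonneg_left (h1 q) (hν q)
    _ = _ := by
        simp_rw [Finset.mul_sum, Finset.sum_mul]
        rw [Finset.sum_comm]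
        simp_rw [mul_assoc]

theorem Vof_diff {S A : Type*} [Fintype A] [Nonempty A] (f g : S × A → ℝ) (s : S) :
    ∃ a, |Vof f s - Vof g s| ≤ |f (s, a) - g (s, a)| := by
  obtain ⟨a, -, ha⟩ := Finset.exists_mem_eq_sup' (Finset.univ_nonempty (α := A)) (fun a => f (s, a))
  obtain ⟨b, -, hb⟩ := Finset.exists_mem_eq_sup' (Finset.univ_nonempty (α := A)) (fun a => g (s, a))
  have h1 : f (s, b) ≤ Vof f s := Finset.le_sup' (fun a => f (s, a)) (Finset.mem_univ b)
  have h2 : g (s, a) ≤ Vof g s := Finset.le_sup' (fun a => g (s, a)) (Finset.mem_univ a)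
  change Vof f s = _ at ha
  change Vof g s = _ at hb
  rcases le_total (Vof g s) (Vof f s) with h | h
  · refine ⟨a, ?_⟩
    rw [abs_of_nonneg (sub_nonneg.2 h)]
    exact le_trans (by linarith) (le_abs_self _)
  · refine ⟨b, ?_⟩
    rw [abs_of_nonpos (sub_nonpos.2 h)]
    exact le_trans (by linarith) (neg_le_abs _)

/-- (Error propagation.)  Under the concentrability assumption with
constants `C_S`, `C_A` and `C := C_S C_A`, for any aggregation `φ` with
`ε_φ := min_{g ∈ G_φ} ‖g − Q⋆‖_∞` and any `f₀ : S × A → [0, V_max]`, every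
distribution `ν` with `ν ≤ C μ` pointwise satisfies
`‖Q⋆ − f₀‖_{2,ν} ≤ (2 ε_φ + √C ‖f₀ − T_φ^μ f₀‖_{2,μ}) / (1 − γ)`. -/
theorem stmt12 {S A X : Type*} [Fintype S] [Fintype A] [Nonempty S] [Nonempty A]
    [DecidableEq X]
    (P : S → A → S → ℝ) (R : S → A → ℝ) (Rmax γ Vmax : ℝ) (d0 : S → ℝ)
    (hP0 : ∀ s a s', 0 ≤ P s a s') (hP1 : ∀ s a, ∑ s', P s a s' = 1)
    (hR : ∀ s a, 0 ≤ R s a ∧ R s a ≤ Rmax)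
    (hγ0 : 0 ≤ γ) (hγ1 : γ < 1)
    (hVmax : Vmax = Rmax / (1 - γ))
    (hd00 : ∀ s, 0 ≤ d0 s) (hd01 : ∑ s, d0 s = 1)
    (μ : S × A → ℝ) (hμpos : ∀ q, 0 < μ q) (hμsum : ∑ q, μ q = 1)
    (μS : S → ℝ) (hμS : ∀ s, μS s = ∑ a, μ (s, a))
    -- concentrability assumption with constants C_S and C_A
    (CS CA : ℝ)
    (hconc_d0 : ∀ s, d0 s ≤ CS * μS s)
    (hconc_P : ∀ s a s', P s a s' ≤ CS * μS s')
    (hconc_A : ∀ s a, 1 / CA ≤ μ (s, a) / μS s)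
    (φ : S × A → X)
    (Qstar : S × A → ℝ) (hQstar : bellmanT P R γ Qstar = Qstar)
    (εφ : ℝ)
    (hεφ : IsLeast {e : ℝ | ∃ g : S × A → ℝ, PiecewiseConst φ g ∧
              supNorm (fun q => g q - Qstar q) = e} εφ)
    (f₀ : S × A → ℝ) (hf₀ : ∀ q, 0 ≤ f₀ q ∧ f₀ q ≤ Vmax) :
    ∀ ν : S × A → ℝ, (∀ q, 0 ≤ ν q) → (∑ q, ν q = 1) →
      (∀ q, ν q ≤ (CS * CA) * μ q) →
      l2Norm ν (fun q => Qstar q - f₀ q) ≤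
        (2 * εφ + Real.sqrt (CS * CA) *
            l2Norm μ (fun q => f₀ q - projT P R γ μ φ f₀ q)) / (1 - γ) := by
  classical
  have hμS0 : ∀ s, 0 < μS s := fun s => by
    rw [hμS]; exact Finset.sum_pos (fun a _ => hμpos _) Finset.univ_nonempty
  have hμS1 : ∑ s, μS s = 1 := by
    rw [← hμsum, Fintype.sum_prod_type]; exact Finset.sum_congr rfl fun s _ => hμS s
  have hCS : 1 ≤ CS := by
    have := Finset.sum_le_sum fun s (_ : s ∈ Finset.univ) => hconc_d0 s
    rwa [hd01, ← Finset.mul_sum, hμS1, mul_one] at this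
  intro ν₀ hν₀0 hν₀1 hν₀C
  have hC1 : 1 ≤ CS * CA := by
    have := Finset.sum_le_sum fun s (_ : s ∈ Finset.univ) => hν₀C s
    rwa [hν₀1, ← Finset.mul_sum, hμsum, mul_one] at this
  have hCA : 0 < CA := by
    by_contra h
    nlinarith [not_lt.1 h]
  have hCA' : ∀ s a, μS s ≤ CA * μ (s, a) := by
    intro s a
    have := hconc_A s a
    rw [div_le_div_iff₀ hCA (hμS0 s)] at this
    linarith
  -- epsilon
  obtain ⟨g, hg, hge⟩ := hεφ.1
  have hgε : ∀ q, |g q - Qstar q| ≤ εφ := fun q => by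
    rw [← hge]; exact Finset.le_sup' (fun q => |g q - Qstar q|) (Finset.mem_univ q)
  have hε0 : 0 ≤ εφ := (abs_nonneg _).trans (hgε (Classical.arbitrary _))
  -- averaging kernel
  let D : S × A → ℝ := fun q => ∑ q', if φ q' = φ q then μ q' else 0
  have hD : ∀ q, 0 < D q := fun q => by
    refine Finset.sum_pos' (fun q' _ => ?_) ⟨q, Finset.mem_univ _, by simpa using hμpos q⟩
    split_ifs
    · exact (hμpos q').le
    · exact le_rfl
  let w : S × A → S × A → ℝ := fun q q' => if φ q' = φ q then μ q' / D q else 0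
  have hw0 : ∀ q q', 0 ≤ w q q' := fun q q' => by
    simp only [w]; split_ifs
    · exact div_nonneg (hμpos q').le (hD q).le
    · exact le_rfl
  have hw1 : ∀ q, ∑ q', w q q' = 1 := fun q => by
    have : ∀ q', w q q' = (if φ q' = φ q then μ q' else 0) / D q := fun q' => by
      simp only [w]; split_ifs <;> simp
    simp_rw [this]
    rw [← Finset.sum_div]
    exact div_self (hD q).ne'
  have hproj : ∀ f q, projT P R γ μ φ f q = ∑ q', w q q' * bellmanT P R γ f q' := by
    intro f q
    unfold projT
    rw [Finset.sum_div]
    refine Finset.sum_congr rfl fun q' _ => ?_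
    simp only [w]; split_ifs
    · rw [mul_div_right_comm]
    · simp
  have hrev : ∀ q q', μ q * w q q' = μ q' * w q' q := by
    intro q q'
    simp only [w]
    by_cases h : φ q' = φ q
    · have : D q' = D q := by simp only [D, h]
      rw [if_pos h, if_pos h.symm, this]; ring
    · rw [if_neg h, if_neg (fun h' => h h'.symm)]; simp
  -- third term
  have hthird : ∀ q, |projT P R γ μ φ Qstar q - Qstar q| ≤ 2 * εφ := by
    intro q
    rw [hproj, hQstar]
    have e : ∑ q', w q q' * Qstar q' - Qstar q = ∑ q', w q q' * (Qstar q' - Qstar q) := by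
      simp_rw [mul_sub]
      rw [Finset.sum_sub_distrib, ← Finset.sum_mul, hw1, one_mul]
    rw [e]
    calc _ ≤ ∑ q', |w q q' * (Qstar q' - Qstar q)| := Finset.abs_sum_le_sum_abs _ _
      _ ≤ ∑ q', w q q' * (2 * εφ) := by
        refine Finset.sum_le_sum fun q' _ => ?_
        rw [abs_mul, abs_of_nonneg (hw0 q q')]
        by_cases h : φ q' = φ q
        · refine mul_le_mul_of_nonneg_left ?_ (hw0 q q')
          have h1 := abs_le.1 (hgε q')
          have h2 := abs_le.1 (hgε q)
          rw [hg q' q h] at h1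
          exact abs_le.2 ⟨by linarith, by linarith⟩
        · simp [w, h]
      _ = 2 * εφ := by rw [← Finset.sum_mul, hw1, one_mul]
  choose π hπ using Vof_diff f₀ Qstar
  let Adm : (S × A → ℝ) → Prop := fun ν =>
    (∀ q, 0 ≤ ν q) ∧ (∑ q, ν q = 1) ∧ ∀ q, ν q ≤ (CS * CA) * μ q
  -- second term
  have hsecond : ∀ ν, Adm ν → ∃ ν', Adm ν' ∧
      l2Norm ν (fun q => projT P R γ μ φ Qstar q - projT P R γ μ φ f₀ q) ≤
        γ * l2Norm ν' (fun q => Qstar q - f₀ q) := by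
    rintro ν ⟨h0, h1, hC⟩
    let ν1 : S × A → ℝ := fun q' => ∑ q, ν q * w q q'
    have k0 : ∀ q, 0 ≤ ν1 q := fun q' =>
      Finset.sum_nonneg fun q _ => mul_nonneg (h0 q) (hw0 q q')
    have k1 : ∑ q, ν1 q = 1 := by
      simp only [ν1]
      rw [Finset.sum_comm]
      simp_rw [← Finset.mul_sum, hw1, mul_one]
      exact h1
    let m : S → ℝ := fun s' => ∑ q, ν1 q * P q.1 q.2 s'
    have m0 : ∀ s, 0 ≤ m s := fun s' =>
      Finset.sum_nonneg fun q _ => mul_nonneg (k0 q) (hP0 _ _ _)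
    have m1 : ∑ s, m s = 1 := by
      simp only [m]
      rw [Finset.sum_comm]
      simp_rw [← Finset.mul_sum, hP1, mul_one]
      exact k1
    have mC : ∀ s, m s ≤ CS * μS s := fun s' => by
      calc m s' ≤ ∑ q, ν1 q * (CS * μS s') :=
            Finset.sum_le_sum fun q _ => mul_le_mul_of_nonneg_left (hconc_P _ _ _) (k0 q)
        _ = _ := by rw [← Finset.sum_mul, k1, one_mul]
    let ν2 : S × A → ℝ := fun q => if q.2 = π q.1 then m q.1 else 0
    have hsum : ∀ h : S × A → ℝ, ∑ q, ν2 q * h q = ∑ s, m s * h (s, π s) := by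
      intro h
      rw [Fintype.sum_prod_type]
      refine Finset.sum_congr rfl fun s _ => ?_
      simp [ν2]
    refine ⟨ν2, ⟨?_, ?_, ?_⟩, ?_⟩
    · intro q; simp only [ν2]; split_ifs
      · exact m0 _
      · exact le_rfl
    · have := hsum (fun _ => 1)
      simpa [m1] using this
    · rintro ⟨s, a⟩
      have : (0:ℝ) ≤ CS * CA * μ (s, a) := mul_nonneg (by linarith) (hμpos _).le
      simp only [ν2]; split_ifs
      · refine (mC s).trans ?_
        rw [mul_assoc]
        exact mul_le_mul_of_nonneg_left (hCA' s a) (by linarith)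
      · exact this
    · unfold l2Norm
      rw [← Real.sqrt_sq hγ0, ← Real.sqrt_mul (sq_nonneg γ), Real.sqrt_sq hγ0]
      apply Real.sqrt_le_sqrt
      rw [hsum (fun q => (Qstar q - f₀ q) ^ 2)]
      have e : ∀ q, projT P R γ μ φ Qstar q - projT P R γ μ φ f₀ q =
          ∑ q', w q q' * (γ * ∑ s', P q'.1 q'.2 s' * (Vof Qstar s' - Vof f₀ s')) := by
        intro q
        rw [hproj, hproj, ← Finset.sum_sub_distrib]
        refine Finset.sum_congr rfl fun q' _ => ?_
        simp_rw [mul_sub (P q'.1 q'.2 _)]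
        rw [Finset.sum_sub_distrib]
        simp only [bellmanT]
        ring
      simp_rw [e]
      refine (kernel_jensen ν h0 w hw0 hw1 _).trans ?_
      simp_rw [mul_pow]
      calc _ = γ ^ 2 * ∑ q, ν1 q * (∑ s', P q.1 q.2 s' * (Vof Qstar s' - Vof f₀ s')) ^ 2 := by
            rw [Finset.mul_sum]
            refine Finset.sum_congr rfl fun q _ => ?_
            simp only [ν1]; ring
        _ ≤ γ ^ 2 * ∑ s, m s * (Vof Qstar s - Vof f₀ s) ^ 2 := by
            refine mul_le_mul_of_nonneg_left ?_ (sq_nonneg _)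
            exact kernel_jensen ν1 k0 (fun q s => P q.1 q.2 s) (fun q s => hP0 _ _ _)
              (fun q => hP1 _ _) _
        _ ≤ _ := by
            refine mul_le_mul_of_nonneg_left ?_ (sq_nonneg _)
            refine Finset.sum_le_sum fun s _ => mul_le_mul_of_nonneg_left ?_ (m0 s)
            apply sq_le_sq.2
            rw [abs_sub_comm, abs_sub_comm (Qstar _)]
            exact hπ s
  -- first term
  have hfirst : ∀ ν, Adm ν → l2Norm ν (fun q => projT P R γ μ φ f₀ q - f₀ q) ≤
      Real.sqrt (CS * CA) * l2Norm μ (fun q => f₀ q - projT P R γ μ φ f₀ q) := by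
    rintro ν ⟨h0, h1, hC⟩
    unfold l2Norm
    rw [← Real.sqrt_mul (by linarith)]
    apply Real.sqrt_le_sqrt
    rw [Finset.mul_sum]
    refine Finset.sum_le_sum fun q _ => ?_
    have e : (projT P R γ μ φ f₀ q - f₀ q) ^ 2 = (f₀ q - projT P R γ μ φ f₀ q) ^ 2 := by ring
    beta_reduce
    rw [← mul_assoc, e]
    exact mul_le_mul_of_nonneg_right (hC q) (sq_nonneg _)
  set K := 2 * εφ + Real.sqrt (CS * CA) *
            l2Norm μ (fun q => f₀ q - projT P R γ μ φ f₀ q) with hK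
  have hstep : ∀ ν, Adm ν → ∃ ν', Adm ν' ∧ l2Norm ν (fun q => Qstar q - f₀ q) ≤
      K + γ * l2Norm ν' (fun q => Qstar q - f₀ q) := by
    intro ν hν
    obtain ⟨ν', hν', h2⟩ := hsecond ν hν
    refine ⟨ν', hν', ?_⟩
    have h1 := hfirst ν hν
    have h3 : l2Norm ν (fun q => Qstar q - projT P R γ μ φ Qstar q) ≤ 2 * εφ :=
      l2Norm_le_const ν _ hν.1 hν.2.1 _ (by linarith)
        (fun q => by rw [abs_sub_comm]; exact hthird q)
    have t1 := l2Norm_add_le ν (fun q => Qstar q - projT P R γ μ φ Qstar q)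
      (fun q => projT P R γ μ φ Qstar q - f₀ q) hν.1
    have t2 := l2Norm_add_le ν (fun q => projT P R γ μ φ Qstar q - projT P R γ μ φ f₀ q)
      (fun q => projT P R γ μ φ f₀ q - f₀ q) hν.1
    simp only [sub_add_sub_cancel] at t1 t2
    linarith
  -- supremum over admissible distributions
  let E : Set ℝ := {x | ∃ ν, Adm ν ∧ l2Norm ν (fun q => Qstar q - f₀ q) = x}
  have hbdd : BddAbove E := by
    refine ⟨supNorm (fun q => Qstar q - f₀ q), ?_⟩
    rintro x ⟨ν, hν, rfl⟩
    have hs : ∀ q, |Qstar q - f₀ q| ≤ supNorm (fun q => Qstar q - f₀ q) := fun q =>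
      Finset.le_sup' (fun q => |Qstar q - f₀ q|) (Finset.mem_univ q)
    exact l2Norm_le_const ν _ hν.1 hν.2.1 _
      ((abs_nonneg _).trans (hs (Classical.arbitrary _))) hs
  have hmem : l2Norm ν₀ (fun q => Qstar q - f₀ q) ∈ E := ⟨ν₀, ⟨hν₀0, hν₀1, hν₀C⟩, rfl⟩
  have hM : sSup E ≤ K + γ * sSup E := by
    refine csSup_le ⟨_, hmem⟩ ?_
    rintro x ⟨ν, hν, rfl⟩
    obtain ⟨ν', hν', h⟩ := hstep ν hν
    refine h.trans ?_
    have := mul_le_mul_of_nonneg_left (le_csSup hbdd ⟨ν', hν', rfl⟩) hγ0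
    linarith
  rw [le_div_iff₀ (by linarith)]
  have h := le_csSup hbdd hmem
  nlinarith
end

section
/- Let f, f' : S × A → [0, V_max] and ε_dct > 0. Define the discretizations f̄(s,a) := ε_dct · ⌊f(s,a)/ε_dct⌋ and f̄'(s,a) := ε_dct · ⌊f'(s,a)/ε_dct⌋, and the aggregation φ(s,a) := (f̄(s,a), f̄'(s,a)). Then: (i) the number of distinct values taken by φ is at most (⌊V_max/ε_dct⌋ + 1)²; and (ii) if min(‖f − Q⋆‖_∞, ‖f' − Q⋆‖_∞) ≤ ε_F, then ε_φ := min_{g ∈ G_φ} ‖g − Q⋆‖_∞ ≤ ε_F + ε_dct. -/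
/-- (Discretization.)  Given `f, f' : S × A → [0, V_max]` and
`ε_dct > 0`, let `f̄ := ε_dct ⌊f/ε_dct⌋`, `f̄' := ε_dct ⌊f'/ε_dct⌋` and
`φ(s,a) := (f̄(s,a), f̄'(s,a))`.  Then (i) `φ` takes at most `(⌊V_max/ε_dct⌋ + 1)²`
distinct values, and (ii) if `min(‖f − Q⋆‖_∞, ‖f' − Q⋆‖_∞) ≤ ε_F`, then
`ε_φ := min_{g ∈ G_φ} ‖g − Q⋆‖_∞ ≤ ε_F + ε_dct`. -/
theorem stmt14 {S A : Type*} [Fintype S] [Fintype A] [Nonempty S] [Nonempty A]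
    (P : S → A → S → ℝ) (R : S → A → ℝ) (Rmax γ Vmax : ℝ)
    (hP0 : ∀ s a s', 0 ≤ P s a s') (hP1 : ∀ s a, ∑ s', P s a s' = 1)
    (hR : ∀ s a, 0 ≤ R s a ∧ R s a ≤ Rmax)
    (hγ0 : 0 ≤ γ) (hγ1 : γ < 1)
    (hVmax : Vmax = Rmax / (1 - γ))
    (Qstar : S × A → ℝ) (hQstar : bellmanT P R γ Qstar = Qstar)
    (f f' : S × A → ℝ)
    (hf : ∀ q, 0 ≤ f q ∧ f q ≤ Vmax) (hf' : ∀ q, 0 ≤ f' q ∧ f' q ≤ Vmax)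
    (εdct : ℝ) (hεdct : 0 < εdct)
    (fbar fbar' : S × A → ℝ)
    (hfbar : ∀ q, fbar q = εdct * (⌊f q / εdct⌋ : ℝ))
    (hfbar' : ∀ q, fbar' q = εdct * (⌊f' q / εdct⌋ : ℝ))
    (φ : S × A → ℝ × ℝ) (hφ : ∀ q, φ q = (fbar q, fbar' q))
    (εF : ℝ)
    (hmin : min (supNorm (fun q => f q - Qstar q))
              (supNorm (fun q => f' q - Qstar q)) ≤ εF)
    (εφ : ℝ)
    (hεφ : IsLeast {e : ℝ | ∃ g : S × A → ℝ, PiecewiseConst φ g ∧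
              supNorm (fun q => g q - Qstar q) = e} εφ) :
    -- (i) the number of distinct values taken by φ
    ((Nat.card (Set.range φ) : ℤ) ≤ (⌊Vmax / εdct⌋ + 1) ^ 2) ∧
    -- (ii) the approximation error of the induced piecewise-constant class
    εφ ≤ εF + εdct := by
  have key : ∀ x : ℝ, |εdct * (⌊x / εdct⌋ : ℝ) - x| ≤ εdct := by
    intro x
    have h1 := Int.floor_le (x / εdct)
    have h2 := Int.lt_floor_add_one (x / εdct)
    rw [le_div_iff₀ hεdct] at h1
    rw [div_lt_iff₀ hεdct] at h2
    rw [abs_le]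
    constructor <;> nlinarith
  have mem : ∀ x : ℝ, 0 ≤ x ∧ x ≤ Vmax → ⌊x / εdct⌋ ∈ Finset.Icc 0 ⌊Vmax / εdct⌋ := by
    intro x hx
    rw [Finset.mem_Icc]
    exact ⟨Int.floor_nonneg.mpr (div_nonneg hx.1 hεdct.le),
      Int.floor_le_floor (div_le_div_of_nonneg_right hx.2 hεdct.le)⟩
  constructor
  · have hsub : Set.range φ ⊆
        (((Finset.Icc 0 ⌊Vmax / εdct⌋ ×ˢ Finset.Icc 0 ⌊Vmax / εdct⌋).image
          (fun p : ℤ × ℤ => ((εdct * (p.1 : ℝ), εdct * (p.2 : ℝ)) : ℝ × ℝ)) :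
            Finset (ℝ × ℝ)) : Set (ℝ × ℝ)) := by
      rintro _ ⟨q, rfl⟩
      rw [Finset.mem_coe, Finset.mem_image]
      exact ⟨(⌊f q / εdct⌋, ⌊f' q / εdct⌋),
        Finset.mem_product.mpr ⟨mem _ (hf q), mem _ (hf' q)⟩, by rw [hφ, hfbar, hfbar']⟩
    have hcard := Set.ncard_le_ncard hsub (Finset.finite_toSet _)
    rw [Set.ncard_coe_finset] at hcard
    have h2 := hcard.trans Finset.card_image_le
    rw [Finset.card_product, Int.card_Icc] at h2
    have hV : 0 ≤ ⌊Vmax / εdct⌋ := by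
      obtain ⟨q⟩ : Nonempty (S × A) := inferInstance
      have := Finset.mem_Icc.mp (mem _ (hf q))
      exact this.1.trans this.2
    have h3 : ((⌊Vmax / εdct⌋ + 1 - 0).toNat : ℤ) = ⌊Vmax / εdct⌋ + 1 := by
      rw [Int.toNat_of_nonneg] <;> omega
    rw [Nat.card_coe_set_eq, sq]
    calc ((Set.range φ).ncard : ℤ) ≤ _ := Int.ofNat_le.mpr h2
      _ = _ := by rw [Nat.cast_mul, h3]
  · have main : ∀ h hbar : S × A → ℝ, (∀ q, hbar q = εdct * (⌊h q / εdct⌋ : ℝ)) →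
        PiecewiseConst φ hbar → supNorm (fun q => h q - Qstar q) ≤ εF →
        εφ ≤ εF + εdct := by
      intro h hbar hh hpc hle
      refine (hεφ.2 ⟨hbar, hpc, rfl⟩).trans ?_
      refine Finset.sup'_le _ _ fun q _ => ?_
      have h1 : |h q - Qstar q| ≤ εF :=
        (Finset.le_sup' (fun q => |h q - Qstar q|) (Finset.mem_univ q)).trans hle
      have h2 := key (h q)
      rw [← hh] at h2
      have h3 := abs_sub_le (hbar q) (h q) (Qstar q)
      show |hbar q - Qstar q| ≤ _
      linarith
    rcases min_le_iff.mp hmin with h | h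
    · refine main f fbar hfbar (fun q q' e => ?_) h
      rw [hφ, hφ] at e
      exact (Prod.mk.inj e).1
    · refine main f' fbar' hfbar' (fun q q' e => ?_) h
      rw [hφ, hφ] at e
      exact (Prod.mk.inj e).2
end

section
/- There exist a finite MDP (S, A, P, R, γ, d0) with γ = 0.9 and deterministic initial state, a probability distribution μ on S × A whose support Ω is a strict subset of S × A, an aggregation φ : S × A → X, and a function Q : S × A → ℝ, such that: (i) every occupancy distribution d_t^π of every policy π satisfies d_t^π(s,a) ≤ C μ(s,a) for all (s,a) for some finite constant C (so the standard concentrability Assumption 2 holds); (ii) Q ≠ Q⋆, yet both Q⋆ and Q satisfy f(s,a) = (T_φ^μ f)(s,a) for every (s,a) ∈ Ω, where T_φ^μ averages over the μ-support of each cell; and (iii) the greedy policy π_Q of Q is strictly suboptimal: the expected discounted return of π_Q from d0 is strictly less than that of the optimal policy. -/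
open scoped Classical

/-- A finite MDP: finite nonempty state and action spaces, a row-stochastic
transition kernel, a nonnegative reward function, a discount factor `γ ∈ [0,1)`,
and an initial state distribution. -/
structure FinMDP where
  S : Type
  A : Type
  [fS : Fintype S]
  [fA : Fintype A]
  [neS : Nonempty S]
  [neA : Nonempty A]
  P : S → A → S → ℝ
  R : S → A → ℝ
  γ : ℝ
  d0 : S → ℝ
  P_nonneg : ∀ s a s', 0 ≤ P s a s'
  P_sum : ∀ s a, ∑ s', P s a s' = 1
  R_nonneg : ∀ s a, 0 ≤ R s a
  γ_nonneg : 0 ≤ γ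
  γ_lt_one : γ < 1
  d0_nonneg : ∀ s, 0 ≤ d0 s
  d0_sum : ∑ s, d0 s = 1

attribute [instance] FinMDP.fS FinMDP.fA FinMDP.neS FinMDP.neA

namespace FinMDP

/-- The Bellman optimality operator
`(T f)(s,a) = R(s,a) + γ ∑ s', P(s'|s,a) max_{a'} f(s',a')`. -/
noncomputable def bellman (M : FinMDP) (f : M.S × M.A → ℝ) : M.S × M.A → ℝ :=
  fun q => M.R q.1 q.2 +
    M.γ * ∑ s', M.P q.1 q.2 s' *
      Finset.univ.sup' Finset.univ_nonempty (fun a' => f (s', a'))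

/-- A stochastic policy: a probability distribution over actions at every state. -/
def IsPolicy (M : FinMDP) (π : M.S → M.A → ℝ) : Prop :=
  (∀ s a, 0 ≤ π s a) ∧ ∀ s, ∑ a, π s a = 1

/-- The occupancy distributions `d_t^π`:
`d₀^π(s,a) = d0(s) π(a|s)` and
`d_{t+1}^π(s,a) = (∑_{s̃,ã} d_t^π(s̃,ã) P(s|s̃,ã)) π(a|s)`. -/
noncomputable def occ (M : FinMDP) (π : M.S → M.A → ℝ) : ℕ → M.S × M.A → ℝ
  | 0 => fun q => M.d0 q.1 * π q.1 q.2
  | (t + 1) => fun q =>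
      (∑ q' : M.S × M.A, M.occ π t q' * M.P q'.1 q'.2 q.1) * π q.1 q.2

/-- The expected discounted return of a policy `π` from the initial distribution:
`J(π) = E[∑_{t ≥ 0} γ^t r_t] = ∑_{t ≥ 0} γ^t ∑_{s,a} d_t^π(s,a) R(s,a)`. -/
noncomputable def ret (M : FinMDP) (π : M.S → M.A → ℝ) : ℝ :=
  ∑' t : ℕ, M.γ ^ t * ∑ q : M.S × M.A, M.occ π t q * M.R q.1 q.2

/-- The projected Bellman operator `T_φ^μ`, averaging `T f` over the `μ`-support of
each aggregation cell. -/
noncomputable def projBellman (M : FinMDP) {X : Type} (φ : M.S × M.A → X)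
    (μ : M.S × M.A → ℝ) (f : M.S × M.A → ℝ) : M.S × M.A → ℝ :=
  fun q => (∑ q', if φ q' = φ q then μ q' * M.bellman f q' else 0)
         / (∑ q', if φ q' = φ q then μ q' else 0)

end FinMDP

/-- The two-state self-loop MDP; `true` is the initial state, `false` is unreachable. -/
noncomputable def exM : FinMDP where
  S := Bool
  A := Bool
  P := fun s _ s' => if s' = s then 1 else 0
  R := fun s a => if s = true then (if a = true then 1 else 0) else 9 / 10
  γ := 9 / 10
  d0 := fun s => if s = true then 1 else 0
  P_nonneg := by intro s a s'; (try dsimp only); split_ifs <;> norm_num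
  P_sum := by intro s a; cases s <;> simp
  R_nonneg := by intro s a; (try dsimp only); split_ifs <;> norm_num
  γ_nonneg := by norm_num
  γ_lt_one := by norm_num
  d0_nonneg := by intro s; (try dsimp only); split_ifs <;> norm_num
  d0_sum := by simp

theorem ex_sup (f : Bool → ℝ) :
    (Finset.univ : Finset Bool).sup' Finset.univ_nonempty f = max (f true) (f false) := by
  apply le_antisymm
  · apply Finset.sup'_le
    intro b _
    cases b
    · exact le_max_right _ _
    · exact le_max_left _ _
  · exact max_le (Finset.le_sup' f (Finset.mem_univ true))
      (Finset.le_sup' f (Finset.mem_univ false))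

/-- Monomorphic wrappers around the notions for `exM`. -/
noncomputable def exB (f : Bool × Bool → ℝ) : Bool × Bool → ℝ := exM.bellman f

/-- Occupancies of `exM`. -/
noncomputable def exO (π : Bool → Bool → ℝ) (t : ℕ) : Bool × Bool → ℝ := exM.occ π t

theorem ex_bellman (f : Bool × Bool → ℝ) (s a : Bool) :
    exB f (s, a) = (if s = true then (if a = true then 1 else 0) else 9 / 10) +
      9 / 10 * max (f (s, true)) (f (s, false)) := by
  have h : exB f (s, a) =
      @ite ℝ (s = true) (Classical.propDecidable _)
        (@ite ℝ (a = true) (Classical.propDecidable _) 1 0) (9 / 10) +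
      9 / 10 * ∑ s' : Bool, (@ite ℝ (s' = s) (Classical.propDecidable _) (1 : ℝ) 0) *
        (Finset.univ : Finset Bool).sup' Finset.univ_nonempty (fun a' => f (s', a')) := by
    first
    | rfl
    | (simp only [exB, FinMDP.bellman, exM]; congr!)
  rw [h]
  simp only [ex_sup]
  cases s <;> cases a <;> simp

theorem ex_occ (π : Bool → Bool → ℝ) (h : ∀ s, ∑ a, π s a = 1) (t : ℕ) (s a : Bool) :
    exO π t (s, a) = if s = true then π s a else 0 := by
  induction t generalizing s a with
  | zero =>
    have h0 : exO π 0 (s, a) = (if s = true then (1 : ℝ) else 0) * π s a := rfl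
    rw [h0]; cases s <;> simp
  | succ t ih =>
    have h0 : exO π (t + 1) (s, a) =
      (∑ q' : Bool × Bool, exO π t q' * (if s = q'.1 then (1 : ℝ) else 0)) * π s a := rfl
    have h1 := h true
    rw [Fintype.sum_bool] at h1
    rw [h0, Fintype.sum_prod_type]
    simp only [Fintype.sum_bool, ih]
    cases s <;> simp [h1]

theorem ex_ret (π : Bool → Bool → ℝ) (h : ∀ s, ∑ a, π s a = 1) :
    exM.ret π = ∑' t : ℕ, (9 / 10 : ℝ) ^ t * π true true := by
  have h0 : exM.ret π = ∑' t : ℕ, (9 / 10 : ℝ) ^ t * ∑ q : Bool × Bool, exO π t q *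
    (if q.1 = true then (if q.2 = true then 1 else 0) else 9 / 10) := rfl
  rw [h0]
  congr 1
  funext t
  rw [Fintype.sum_prod_type]
  simp [ex_occ π h]

/-- The data distribution. -/
noncomputable def exMu : Bool × Bool → ℝ
  | (false, true) => 0
  | (false, false) => 1 / 3
  | (true, true) => 1 / 3
  | (true, false) => 1 / 3

/-- The aggregation: `(true, true)` is alone in its cell. -/
def exPhi : Bool × Bool → Bool := fun q => q.1 && q.2

/-- The optimal action-value function. -/
noncomputable def exQs : Bool × Bool → ℝ
  | (true, true) => 10
  | (true, false) => 9
  | (false, _) => 9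

/-- The spurious fixed point. -/
noncomputable def exQ : Bool × Bool → ℝ
  | (true, true) => 19
  | (false, true) => 211 / 9
  | (true, false) => 20
  | (false, false) => 20

/-- Projected Bellman operator of `exM`. -/
noncomputable def exT (f : Bool × Bool → ℝ) : Bool × Bool → ℝ := exM.projBellman exPhi exMu f

theorem ex_proj (f : Bool × Bool → ℝ) (s a : Bool) :
    exT f (s, a) =
      if (s && a) = true then exB f (true, true)
      else (exB f (true, false) + exB f (false, false)) / 2 := by
  have h0 : exT f (s, a) =
    (∑ q' : Bool × Bool, @ite ℝ (exPhi q' = exPhi (s, a)) (Classical.propDecidable _)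
        (exMu q' * exB f q') 0)
      / (∑ q' : Bool × Bool, @ite ℝ (exPhi q' = exPhi (s, a)) (Classical.propDecidable _)
        (exMu q') 0) := rfl
  rw [h0]
  simp only [Fintype.sum_prod_type, Fintype.sum_bool]
  cases s <;> cases a <;> simp [exPhi, exMu] <;> ring

/-- (Counterexample: contrived `μ`.)  There exist a finite MDP with
`γ = 0.9` and a deterministic initial state, a data distribution `μ` whose support is
a strict subset of `S × A`, an aggregation `φ`, and a function `Q`, such that:
(i) all occupancy distributions of all policies are bounded by `C μ` for some finite
`C` (standard concentrability holds); (ii) `Q ≠ Q⋆`, yet both `Q⋆` and `Q` are fixed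
points of the projected Bellman operator `T_φ^μ` on the support of `μ`; and
(iii) the greedy policy of `Q` is strictly suboptimal. -/
theorem stmt16 :
    ∃ (M : FinMDP) (X : Type) (φ : M.S × M.A → X) (μ : M.S × M.A → ℝ)
      (Qstar Q : M.S × M.A → ℝ),
      -- the MDP has γ = 0.9 and a deterministic initial state
      M.γ = 0.9 ∧
      (∃ s0 : M.S, M.d0 s0 = 1) ∧
      -- μ is a probability distribution whose support is a strict subset of S × A
      (∀ q, 0 ≤ μ q) ∧ (∑ q, μ q = 1) ∧
      {q : M.S × M.A | 0 < μ q} ≠ Set.univ ∧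
      -- (i) standard concentrability (Assumption 2) holds with a finite constant C
      (∃ C : ℝ, ∀ π : M.S → M.A → ℝ, M.IsPolicy π →
        ∀ (t : ℕ) (q : M.S × M.A), M.occ π t q ≤ C * μ q) ∧
      -- Q⋆ is the (unique) fixed point of the Bellman optimality operator
      M.bellman Qstar = Qstar ∧
      -- (ii) Q ≠ Q⋆, yet both are fixed points of T_φ^μ on the support of μ
      Q ≠ Qstar ∧
      (∀ q, 0 < μ q →
        Qstar q = M.projBellman φ μ Qstar q ∧ Q q = M.projBellman φ μ Q q) ∧
      -- (iii) every greedy policy of Q is strictly suboptimal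
      (∀ πg : M.S → M.A, (∀ s a, Q (s, a) ≤ Q (s, πg s)) →
        ∃ π' : M.S → M.A → ℝ, M.IsPolicy π' ∧
          M.ret (fun s a => if a = πg s then 1 else 0) < M.ret π') := by
  refine ⟨exM, Bool, exPhi, exMu, exQs, exQ, ?_, ⟨true, ?_⟩, ?_, ?_, ?_, ⟨3, ?_⟩, ?_, ?_, ?_, ?_⟩
  · show (9 / 10 : ℝ) = 0.9
    norm_num
  · show (if true = true then (1 : ℝ) else 0) = 1
    simp
  · rintro ⟨s, a⟩
    change Bool at s a
    cases s <;> cases a <;> norm_num [exMu]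
  · show ∑ q : Bool × Bool, exMu q = 1
    simp only [Fintype.sum_prod_type, Fintype.sum_bool]
    norm_num [exMu]
  · intro h
    have h1 : ((false, true) : Bool × Bool) ∈ {q : Bool × Bool | 0 < exMu q} :=
      h.symm ▸ Set.mem_univ _
    simp [exMu] at h1
  · rintro π ⟨hn, hs⟩ t ⟨s, a⟩
    change Bool at s a
    change Bool → Bool → ℝ at π
    change ∀ s a : Bool, 0 ≤ π s a at hn
    change ∀ s : Bool, ∑ a : Bool, π s a = 1 at hs
    change exO π t (s, a) ≤ 3 * exMu (s, a)
    rw [ex_occ π hs t s a]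
    have h1 := hs true
    rw [Fintype.sum_bool] at h1
    have h2 := hn true true
    have h3 := hn true false
    cases s <;> cases a <;> norm_num [exMu] <;> linarith
  · funext ⟨s, a⟩
    change Bool at s a
    change exB exQs (s, a) = exQs (s, a)
    rw [ex_bellman]
    cases s <;> cases a <;> norm_num [exQs]
  · intro h
    have h1 := congrFun h ((true, true) : Bool × Bool)
    norm_num [exQ, exQs] at h1
  · rintro ⟨s, a⟩ hq
    change Bool at s a
    change 0 < exMu (s, a) at hq
    change exQs (s, a) = exT exQs (s, a) ∧ exQ (s, a) = exT exQ (s, a)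
    rw [ex_proj, ex_proj]
    simp only [ex_bellman]
    cases s <;> cases a <;> norm_num [exQ, exQs, exMu] at hq <;> norm_num [exQ, exQs]
  · intro πg hg
    change Bool → Bool at πg
    have h1 : πg true = false := by
      have h2 : exQ (true, false) ≤ exQ (true, πg true) := hg true false
      cases h3 : πg true
      · rfl
      · rw [h3] at h2
        norm_num [exQ] at h2
    have hp : ∀ s : Bool, ∑ a : Bool, (fun _ a => if a = true then (1 : ℝ) else 0 :
        Bool → Bool → ℝ) s a = 1 := by
      intro s; simp
    refine ⟨(fun _ a => if a = true then (1 : ℝ) else 0 : Bool → Bool → ℝ), ⟨?_, hp⟩, ?_⟩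
    · intro s a
      dsimp only
      split_ifs <;> norm_num
    · refine lt_of_eq_of_lt (ex_ret (fun s a => @ite ℝ (a = πg s) (Classical.propDecidable _) 1 0) ?_) ?_
      · intro s; cases hh : πg s <;> simp [hh]
      · refine lt_of_lt_of_eq ?_ (ex_ret _ hp).symm
        simp only [h1]
        simp only [if_true, mul_one]
        rw [tsum_geometric_of_lt_one (by norm_num) (by norm_num)]
        norm_num
end
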